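/- arXiv:1901.04034 — 3 statements merged into one kernel-verified Lean document; each statement's English description precedes it below -/
import Mathlib

section
/- Let T be a tree of order d and let n be an integer with 2 ≤ n < (d−1)/2. Then c_{n,1}(T) = Σ_R (L(T) − L₀(R))·ρ_R(T) + Σ_{R'} L(T_{R'})·ρ_{R'}(T), where the first sum ranges over all isomorphism classes R of rooted trees of order n, the second sum ranges over all isomorphism classes R' of rooted trees of order n+1, L(T) denotes the number of leaves of a tree, L₀(R) denotes the number of leaves of a rooted tree R other than its root, and T_{R'} denotes the unrooted tree underlying R'. -/
open SimpleGraph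

/-- The multiset of orders of the connected components of a graph on a finite vertex set. -/
noncomputable def compSizes {V : Type} [Fintype V] (H : SimpleGraph V) : Multiset ℕ :=
  haveI : DecidableEq H.ConnectedComponent := Classical.decEq _
  (Finset.univ.image H.connectedComponentMk).val.map fun c => c.supp.ncard

/-- `cCoeff G lam` is the number of subsets `F` of the edge set of `G` such that the
multiset of orders of the connected components of the spanning subgraph `(V, F)`
is exactly `lam`.  For a tree `T` this is the coefficient `c_lam(T)`. -/
noncomputable def cCoeff {V : Type} [Fintype V] (G : SimpleGraph V) (lam : Multiset ℕ) : ℕ :=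
  Set.ncard {F : Set (Sym2 V) | F ⊆ G.edgeSet ∧ compSizes (SimpleGraph.fromEdgeSet F) = lam}

/-- `IsRootedSubtree T e v R r` says: `e` is an edge of `T`, `v` is an endpoint of `e`,
and the connected component of `v` after deleting `e`, rooted at `v`, is isomorphic to
the rooted tree `(R, r)` via a graph isomorphism sending root to root. -/
def IsRootedSubtree {V W : Type} (T : SimpleGraph V) (e : Sym2 V) (v : V)
    (R : SimpleGraph W) (r : W) : Prop :=
  e ∈ T.edgeSet ∧ v ∈ e ∧
  ∃ φ : R ≃g (T.deleteEdges {e}).induce ((T.deleteEdges {e}).connectedComponentMk v).supp,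
    (φ r : V) = v

/-- `rho T R r` is the number of rooted subtrees of `T` isomorphic to the rooted tree
`(R, r)`, counted over all pairs (edge `e`, endpoint `v` of `e`). -/
noncomputable def rho {V W : Type} [Fintype V] (T : SimpleGraph V)
    (R : SimpleGraph W) (r : W) : ℕ :=
  Set.ncard {p : Sym2 V × V | IsRootedSubtree T p.1 p.2 R r}

/-- The number of leaves (vertices of degree one) of a graph. -/
noncomputable def leafCount {V : Type} [Fintype V] (G : SimpleGraph V) : ℕ :=
  Set.ncard {v : V | (G.neighborSet v).ncard = 1}

/-- The rooted tree `R_{n,2}` (for `n ≥ 3`): the path `0 - 1 - ⋯ - (n-2)` rooted at the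
leaf `0`, together with an extra leaf `n-1` attached to the second outward-most vertex
`n-3` from the root.  (`R_{n,1}` is `SimpleGraph.pathGraph n` rooted at the leaf `0`.) -/
def Rtwo (n : ℕ) : SimpleGraph (Fin n) :=
  SimpleGraph.fromRel fun i j =>
    (j.val = i.val + 1 ∧ j.val ≤ n - 2) ∨ (i.val = n - 3 ∧ j.val = n - 1)

/-- A rooted tree on the vertex set `Fin n`: a tree together with a choice of root. -/
def RTree (n : ℕ) : Type := {p : SimpleGraph (Fin n) × Fin n // p.1.IsTree}

/-- Rooted isomorphism: a graph isomorphism sending root to root. -/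
def rootedSetoid (n : ℕ) : Setoid (RTree n) where
  r p q := ∃ φ : p.1.1 ≃g q.1.1, φ p.1.2 = q.1.2
  iseqv := by
    refine ⟨fun p => ⟨(Iso.refl : p.1.1 ≃g p.1.1), rfl⟩, ?_, ?_⟩
    · rintro p q ⟨φ, h⟩
      exact ⟨φ.symm, by rw [← h, RelIso.symm_apply_apply]⟩
    · rintro p q r ⟨φ, h⟩ ⟨ψ, h'⟩
      exact ⟨φ.trans ψ, by rw [RelIso.trans_apply, h, h']⟩

/-- Isomorphism classes of rooted trees of order `n`. -/
def RTreeClass (n : ℕ) : Type := Quotient (rootedSetoid n)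

noncomputable instance (n : ℕ) : Fintype (RTreeClass n) := by
  classical
  have h1 : Finite (RTree n) := Subtype.finite
  have h2 : Finite (Quotient (rootedSetoid n)) := Quotient.finite _
  exact @Fintype.ofFinite _ h2

/-- `rhoClass T q` : the number of rooted subtrees of `T` belonging to the rooted-tree
isomorphism class `q` (computed via a representative). -/
noncomputable def rhoClass {V : Type} [Fintype V] (T : SimpleGraph V) {n : ℕ}
    (q : RTreeClass n) : ℕ :=
  rho T q.out.1.1 q.out.1.2

/-- The number of leaves of a rooted tree other than its root. -/
noncomputable def nonRootLeafCount {n : ℕ} (p : RTree n) : ℕ :=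
  Set.ncard {w : Fin n | w ≠ p.1.2 ∧ (p.1.1.neighborSet w).ncard = 1}

/-!
In a forest, an edge set with prescribed component orders is the same thing as a partition of the
vertices into connected parts with these orders. For the orders `d - n - 1, n, 1`, which are
pairwise distinct, such a partition is a pair `(S, w)` with `|S| = n` and `w ∉ S` for which `S`
and the rest are connected. In a tree there are two cases. If `w` is adjacent to `S`, then
`S ∪ {w}` is a branch of order `n + 1` (both it and its complement are connected), and `w` is a leaf
of that branch. Otherwise `S` is a branch of order `n`, and `w` is a leaf of the tree outside
`S`; as `n ≥ 2` the root of `S` is not a leaf of the tree, so there are `L(T) - L₀(S)` choices of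
`w`. Branches are the vertex sets of rooted subtrees, each given by a unique pair (edge,
endpoint), and both leaf counts depend only on the rooted isomorphism class.
-/

section Components

variable {V : Type*} {G : SimpleGraph V}

theorem exists_supp_eq_iff {S : Set V} :
    (∃ C : G.ConnectedComponent, C.supp = S) ↔
      (G.induce S).Connected ∧ ∀ x ∈ S, ∀ y, G.Adj x y → y ∈ S := by
  constructor
  · rintro ⟨C, rfl⟩
    exact ⟨C.maximal_connected_induce_supp.prop,
      fun x hx y hxy => C.mem_supp_of_adj_mem_supp hx hxy⟩
  · rintro ⟨hS, hclosed⟩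
    obtain ⟨⟨x, hx⟩⟩ := hS.nonempty
    refine ⟨G.connectedComponentMk x, Set.Subset.antisymm (fun y hy => ?_) fun y hy => ?_⟩
    · by_contra hyS
      obtain ⟨p⟩ := ConnectedComponent.exact hy
      obtain ⟨a, -, ha, ha'⟩ := p.reverse.exists_boundary_dart S hx hyS
      exact ha' (hclosed _ ha _ a.adj)
    · exact ConnectedComponent.sound
        ((hS.preconnected ⟨y, hy⟩ ⟨x, hx⟩).map (Embedding.induce S).toHom)

theorem connected_induce_insert {S : Set V} (hS : (G.induce S).Connected) {u w : V} (hu : u ∈ S)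
    (hwu : G.Adj w u) : (G.induce (insert w S)).Connected := by
  rw [← Set.singleton_union]
  exact connected_induce_union Preconnected.of_subsingleton hS.preconnected
    (Set.mem_singleton w) hu hwu

theorem exists_adj_notMem (hG : G.Connected) {S : Set V} (hS : S.Nonempty) (hS' : Sᶜ.Nonempty) :
    ∃ x ∈ S, ∃ y ∉ S, G.Adj x y := by
  obtain ⟨x, hx⟩ := hS
  obtain ⟨y, hy⟩ := hS'
  obtain ⟨p⟩ := hG.preconnected x y
  obtain ⟨a, -, ha, ha'⟩ := p.exists_boundary_dart S hx hy
  exact ⟨_, ha, _, ha', a.adj⟩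

theorem exists_adj_mem {S : Set V} (hS : (G.induce S).Connected) (hnt : S.Nontrivial) {w : V}
    (hw : w ∈ S) : ∃ u ∈ S, G.Adj w u := by
  have := hnt.coe_sort
  obtain ⟨u, hu⟩ := hS.preconnected.exists_adj_of_nontrivial ⟨w, hw⟩
  exact ⟨u, u.2, hu⟩

theorem adj_of_reachable_of_le {H : SimpleGraph V} (hG : G.IsAcyclic) (hle : H ≤ G) {x y : V}
    (hxy : G.Adj x y) (h : H.Reachable x y) : H.Adj x y :=
  ((isAcyclic_iff_forall_adj_isBridge.1 hG hxy).anti hle).reachable_iff_adj.1 h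

theorem not_reachable_deleteEdges (hG : G.IsAcyclic) {x y : V} (hxy : G.Adj x y) :
    ¬(G.deleteEdges {s(x, y)}).Reachable x y := fun h => by
  simpa using adj_of_reachable_of_le hG (deleteEdges_le _) hxy h

theorem reachable_deleteEdges_of_mem {S : Set V} (hS : (G.induce S).Preconnected) {e : Sym2 V}
    {z : V} (hze : z ∈ e) (hzS : z ∉ S) {x y : V} (hx : x ∈ S) (hy : y ∈ S) :
    (G.deleteEdges {e}).Reachable x y := by
  let f : G.induce S →g G.deleteEdges {e} := ⟨Subtype.val, fun {a b} hab => by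
    refine deleteEdges_adj.2 ⟨hab, fun h : s(a.1, b.1) = e => hzS ?_⟩
    rw [← h, Sym2.mem_iff] at hze
    rcases hze with rfl | rfl
    · exact a.2
    · exact b.2⟩
  exact (hS ⟨x, hx⟩ ⟨y, hy⟩).map f

theorem ncard_neighborSet_inter_eq_one_iff (hG : G.IsAcyclic) {S : Set V}
    (hS : (G.induce S).Connected) (hnt : S.Nontrivial) {w : V} (hw : w ∈ S) :
    (G.neighborSet w ∩ S).ncard = 1 ↔ (G.induce (S \ {w})).Connected := by
  constructor
  · intro h
    obtain ⟨u, hu⟩ := Set.ncard_eq_one.1 h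
    have hwu : u ∈ G.neighborSet w ∩ S := hu ▸ Set.mem_singleton u
    have hleaf : ∀ x ∉ ({⟨w, hw⟩}ᶜ : Set S), ((G.induce S).neighborSet x).Subsingleton := by
      intro x hx y hy z hz
      obtain rfl : x = ⟨w, hw⟩ := by simpa using hx
      have hmem (t : S) (ht : G.Adj w t) : (t : V) = u := by
        exact Set.mem_singleton_iff.1 (hu ▸ ⟨ht, t.2⟩)
      exact Subtype.ext ((hmem y hy).trans (hmem z hz).symm)
    let f : (G.induce S).induce {⟨w, hw⟩}ᶜ →g G.induce (S \ {w}) :=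
      ⟨fun x => ⟨x, x.1.2, fun h => x.2 (Subtype.ext h)⟩, fun h => h⟩
    refine (connected_iff _).2 ⟨fun x y => ?_, ⟨⟨u, hwu.2, hwu.1.ne'⟩⟩⟩
    exact (hS.preconnected.induce_of_degree_eq_one hleaf
      ⟨⟨x, x.2.1⟩, fun h => x.2.2 (congrArg Subtype.val h)⟩
      ⟨⟨y, y.2.1⟩, fun h => y.2.2 (congrArg Subtype.val h)⟩).map f
  · intro h
    obtain ⟨u, hu, hwu⟩ := exists_adj_mem hS hnt hw
    refine Set.ncard_eq_one.2 ⟨u, Set.eq_singleton_iff_unique_mem.2 ⟨⟨hwu, hu⟩, fun z hz => ?_⟩⟩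
    by_contra hzu
    have hzw : (G.deleteEdges {s(w, u)}).Adj w z := by
      simpa [hzu, hz.1.ne'] using hz.1
    refine not_reachable_deleteEdges hG hwu (hzw.reachable.trans ?_)
    exact reachable_deleteEdges_of_mem h.preconnected (Sym2.mem_mk_left w u) (by simp)
      ⟨hz.2, hz.1.ne'⟩ ⟨hu, hwu.ne'⟩

end Components

section Branches

variable {V : Type*} {T : SimpleGraph V}

/-- The vertex set of the component of `v` left after removing the edge `e`: the vertex set of the
rooted subtree given by the pair `(e, v)`. -/
def edgeSide (T : SimpleGraph V) (e : Sym2 V) (v : V) : Set V :=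
  ((T.deleteEdges {e}).connectedComponentMk v).supp

/-- A branch of a tree: a vertex set such that both it and its complement span connected subgraphs.
These are the vertex sets of the rooted subtrees. -/
def IsBranch (T : SimpleGraph V) (S : Set V) : Prop :=
  (T.induce S).Connected ∧ (T.induce Sᶜ).Connected

theorem mem_edgeSide {e : Sym2 V} {v x : V} :
    x ∈ edgeSide T e v ↔ (T.deleteEdges {e}).Reachable x v :=
  ConnectedComponent.eq

theorem self_mem_edgeSide (e : Sym2 V) (v : V) : v ∈ edgeSide T e v :=
  mem_edgeSide.2 (Reachable.refl v)

theorem notMem_edgeSide (hT : T.IsAcyclic) {v b : V} (hvb : T.Adj v b) :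
    b ∉ edgeSide T s(v, b) v := fun h =>
  not_reachable_deleteEdges hT hvb (mem_edgeSide.1 h).symm

theorem eq_of_adj_of_mem_of_notMem {e : Sym2 V} {v x y : V} (hxy : T.Adj x y)
    (hx : x ∈ edgeSide T e v) (hy : y ∉ edgeSide T e v) : s(x, y) = e := by
  by_contra hne
  have hyx : (T.deleteEdges {e}).Adj y x := deleteEdges_adj.2 ⟨hxy.symm, by rwa [Sym2.eq_swap]⟩
  exact hy (mem_edgeSide.2 (hyx.reachable.trans (mem_edgeSide.1 hx)))

theorem eq_and_eq_of_adj_of_mem_of_notMem (hT : T.IsAcyclic) {v b x y : V} (hvb : T.Adj v b)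
    (hxy : T.Adj x y) (hx : x ∈ edgeSide T s(v, b) v) (hy : y ∉ edgeSide T s(v, b) v) :
    x = v ∧ y = b := by
  rcases Sym2.eq_iff.1 (eq_of_adj_of_mem_of_notMem hxy hx hy) with h | ⟨rfl, -⟩
  · exact h
  · exact absurd hx (notMem_edgeSide hT hvb)

theorem compl_edgeSide (hT : T.IsTree) {v b : V} (hvb : T.Adj v b) :
    (edgeSide T s(v, b) v)ᶜ = edgeSide T s(v, b) b := by
  refine Set.Subset.antisymm ?_ fun x hxb hxv => not_reachable_deleteEdges hT.isAcyclic hvb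
    ((mem_edgeSide.1 hxv).symm.trans (mem_edgeSide.1 hxb))
  rw [Set.compl_subset_iff_union]
  by_contra hne
  obtain ⟨x, hx, y, hy, hxy⟩ := exists_adj_notMem hT.connected
    ⟨v, Or.inl (self_mem_edgeSide _ v)⟩ (Set.nonempty_compl.2 hne)
  simp only [Set.mem_union, not_or] at hy
  have he : s(x, y) = s(v, b) :=
    hx.elim (eq_of_adj_of_mem_of_notMem hxy · hy.1) (eq_of_adj_of_mem_of_notMem hxy · hy.2)
  rcases Sym2.mem_iff.1 (he ▸ Sym2.mem_mk_right x y) with rfl | rfl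
  · exact hy.1 (self_mem_edgeSide _ _)
  · exact hy.2 (self_mem_edgeSide _ _)

theorem connected_induce_edgeSide (e : Sym2 V) (v : V) : (T.induce (edgeSide T e v)).Connected :=
  (ConnectedComponent.maximal_connected_induce_supp _).prop.mono
    (comap_monotone _ (deleteEdges_le _))

theorem isBranch_edgeSide (hT : T.IsTree) {v b : V} (hvb : T.Adj v b) :
    IsBranch T (edgeSide T s(v, b) v) :=
  ⟨connected_induce_edgeSide _ _, compl_edgeSide hT hvb ▸ connected_induce_edgeSide _ _⟩

theorem subset_edgeSide {S : Set V} (hS : (T.induce S).Preconnected) {e : Sym2 V} {v z : V}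
    (hv : v ∈ S) (hze : z ∈ e) (hz : z ∉ S) : S ⊆ edgeSide T e v := fun _ hx =>
  mem_edgeSide.2 (reachable_deleteEdges_of_mem hS hze hz hx hv)

theorem IsBranch.exists_edgeSide_eq (hT : T.IsTree) {S : Set V} (hS : IsBranch T S) :
    ∃ v b, T.Adj v b ∧ edgeSide T s(v, b) v = S := by
  obtain ⟨v, hv, b, hb, hvb⟩ := exists_adj_notMem hT.connected
    (Set.nonempty_coe_sort.1 hS.1.nonempty) (Set.nonempty_coe_sort.1 hS.2.nonempty)
  refine ⟨v, b, hvb, Set.Subset.antisymm (Set.compl_subset_compl.1 ?_)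
    (subset_edgeSide hS.1.preconnected hv (Sym2.mem_mk_right v b) hb)⟩
  rw [compl_edgeSide hT hvb]
  exact subset_edgeSide hS.2.preconnected hb (Sym2.mem_mk_left v b) fun h => h hv

theorem exists_adj_eq_mk {e : Sym2 V} {v : V} (he : e ∈ T.edgeSet) (hv : v ∈ e) :
    ∃ b, T.Adj v b ∧ e = s(v, b) := by
  obtain ⟨b, rfl⟩ := Sym2.mem_iff_exists.1 hv
  exact ⟨b, he, rfl⟩

theorem bijOn_edgeSide (hT : T.IsTree) :
    Set.BijOn (fun p : Sym2 V × V => edgeSide T p.1 p.2) {p | p.1 ∈ T.edgeSet ∧ p.2 ∈ p.1}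
      {S | IsBranch T S} := by
  refine ⟨?_, ?_, ?_⟩
  · rintro ⟨e, v⟩ ⟨he : e ∈ T.edgeSet, hv : v ∈ e⟩
    obtain ⟨b, hvb, rfl⟩ := exists_adj_eq_mk he hv
    exact isBranch_edgeSide hT hvb
  · rintro ⟨e, v⟩ ⟨he : e ∈ T.edgeSet, hv : v ∈ e⟩
      ⟨e', v'⟩ ⟨he' : e' ∈ T.edgeSet, hv' : v' ∈ e'⟩ h
    obtain ⟨b, hvb, rfl⟩ := exists_adj_eq_mk he hv
    obtain ⟨b', hvb', rfl⟩ := exists_adj_eq_mk he' hv'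
    dsimp only at h
    obtain ⟨rfl, rfl⟩ := eq_and_eq_of_adj_of_mem_of_notMem hT.isAcyclic hvb hvb'
      (h ▸ self_mem_edgeSide _ _) (h ▸ notMem_edgeSide hT.isAcyclic hvb')
    rfl
  · intro S hS
    obtain ⟨v, b, hvb, h⟩ := hS.exists_edgeSide_eq hT
    exact ⟨(s(v, b), v), ⟨hvb, Sym2.mem_mk_left v b⟩, h⟩

theorem induce_deleteEdges_edgeSide (hT : T.IsAcyclic) {e : Sym2 V} {v : V} (he : e ∈ T.edgeSet)
    (hv : v ∈ e) : (T.deleteEdges {e}).induce (edgeSide T e v) = T.induce (edgeSide T e v) := by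
  obtain ⟨b, hvb, rfl⟩ := exists_adj_eq_mk he hv
  ext x y
  refine ⟨fun h => (deleteEdges_adj.1 h).1, fun h => deleteEdges_adj.2 ⟨h, fun hxy => ?_⟩⟩
  have hb : b ∈ s((x : V), (y : V)) := by
    rw [show s((x : V), (y : V)) = s(v, b) from hxy]
    exact Sym2.mem_mk_right v b
  rcases Sym2.mem_iff.1 hb with h | h
  · exact notMem_edgeSide hT hvb (Set.mem_of_eq_of_mem h x.2)
  · exact notMem_edgeSide hT hvb (Set.mem_of_eq_of_mem h y.2)

end Branches

section Splittings

variable {V : Type*} {T : SimpleGraph V} {S : Set V} {w : V}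

/-- `S`, `{w}` and the remaining vertices split the graph `T` into three connected pieces. -/
structure IsSplitting (T : SimpleGraph V) (S : Set V) (w : V) : Prop where
  notMem : w ∉ S
  connected : (T.induce S).Connected
  connected_compl : (T.induce (insert w S)ᶜ).Connected

theorem isSplitting_and_adj_iff (hT : T.IsAcyclic) (hw : w ∉ S) :
    (IsSplitting T S w ∧ ∃ u ∈ S, T.Adj w u) ↔
      IsBranch T (insert w S) ∧ (T.neighborSet w ∩ insert w S).ncard = 1 := by
  have hleaf (hS : (T.induce (insert w S)).Connected) {u : V} (hu : u ∈ S) :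
      (T.neighborSet w ∩ insert w S).ncard = 1 ↔ (T.induce S).Connected := by
    have hnt : (insert w S).Nontrivial :=
      ⟨w, S.mem_insert w, u, S.mem_insert_of_mem w hu, fun h => hw (h ▸ hu)⟩
    rw [ncard_neighborSet_inter_eq_one_iff hT hS hnt (S.mem_insert w),
      Set.insert_sdiff_self_of_notMem hw]
  constructor
  · rintro ⟨h, u, hu, hwu⟩
    have hS := connected_induce_insert h.connected hu hwu
    exact ⟨⟨hS, h.connected_compl⟩, (hleaf hS hu).2 h.connected⟩
  · rintro ⟨hS, h⟩
    obtain ⟨u, hwu, hu⟩ := Set.nonempty_of_ncard_ne_zero (h ▸ one_ne_zero)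
    have huS : u ∈ S := hu.resolve_left hwu.ne'
    exact ⟨⟨hw, (hleaf hS.1 huS).1 h, hS.2⟩, u, huS, hwu⟩

theorem isSplitting_and_not_adj_iff (hT : T.IsTree) (hw : w ∉ S) (hS' : Sᶜ.Nontrivial) :
    (IsSplitting T S w ∧ ¬∃ u ∈ S, T.Adj w u) ↔ IsBranch T S ∧ (T.neighborSet w).ncard = 1 := by
  have hcompl : (insert w S)ᶜ = Sᶜ \ {w} := by
    rw [Set.insert_eq, Set.compl_union, Set.inter_comm, Set.sdiff_eq]
  have hleaf (hS : (T.induce Sᶜ).Connected) :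
      (T.neighborSet w ∩ Sᶜ).ncard = 1 ↔ (T.induce (insert w S)ᶜ).Connected := by
    rw [ncard_neighborSet_inter_eq_one_iff hT.isAcyclic hS hS' hw, hcompl]
  constructor
  · rintro ⟨h, hadj⟩
    push Not at hadj
    have := Set.nontrivial_of_nontrivial hS'
    obtain ⟨u, hwu⟩ := hT.connected.preconnected.exists_adj_of_nontrivial w
    have huS : u ∈ (insert w S)ᶜ := fun h => h.elim hwu.ne' fun hu => hadj u hu hwu
    have hSc : (T.induce Sᶜ).Connected := by
      have := connected_induce_insert h.connected_compl huS hwu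
      rwa [hcompl, Set.insert_sdiff_singleton, Set.insert_eq_of_mem hw] at this
    have hsub : T.neighborSet w ⊆ Sᶜ := fun u hwu hu => hadj u hu hwu
    refine ⟨⟨h.connected, hSc⟩, ?_⟩
    rw [← Set.inter_eq_left.2 hsub]
    exact (hleaf hSc).2 h.connected_compl
  · rintro ⟨hS, h⟩
    obtain ⟨x, hx⟩ := Set.ncard_eq_one.1 h
    obtain ⟨u, hu, hwu⟩ := exists_adj_mem hS.2 hS' hw
    have hsub : T.neighborSet w ⊆ Sᶜ := by
      have hux : u ∈ ({x} : Set V) := hx ▸ hwu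
      rwa [hx, Set.singleton_subset_iff, ← Set.mem_singleton_iff.1 hux]
    rw [← Set.inter_eq_left.2 hsub, hleaf hS.2] at h
    exact ⟨⟨hw, hS.1, h⟩, fun ⟨y, hy, hwy⟩ => hsub hwy hy⟩

theorem bijOn_insert (hT : T.IsAcyclic) [Finite V] (n : ℕ) :
    Set.BijOn (fun x : Set V × V => (insert x.2 x.1, x.2))
      {x | (IsSplitting T x.1 x.2 ∧ ∃ u ∈ x.1, T.Adj x.2 u) ∧ x.1.ncard = n}
      {x | (IsBranch T x.1 ∧ x.1.ncard = n + 1) ∧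
        x.2 ∈ x.1 ∧ (T.neighborSet x.2 ∩ x.1).ncard = 1} := by
  refine ⟨?_, ?_, ?_⟩
  · rintro ⟨S, w⟩ ⟨h, rfl⟩
    obtain ⟨hS, hleaf⟩ := (isSplitting_and_adj_iff hT h.1.notMem).1 h
    exact ⟨⟨hS, Set.ncard_insert_of_notMem h.1.notMem⟩, S.mem_insert w, hleaf⟩
  · rintro ⟨S, w⟩ ⟨⟨hS : IsSplitting T S w, -⟩, -⟩ ⟨S', w'⟩ ⟨⟨hS' : IsSplitting T S' w', -⟩, -⟩ h
    obtain ⟨hins, rfl : w = w'⟩ := Prod.mk.inj h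
    have : S = S' := by
      rw [← Set.insert_sdiff_self_of_notMem hS.notMem, show insert w S = insert w S' from hins,
        Set.insert_sdiff_self_of_notMem hS'.notMem]
    rw [this]
  · rintro ⟨S, w⟩ ⟨⟨hS, hcard⟩, hw : w ∈ S, hleaf⟩
    have hins : insert w (S \ {w}) = S := by
      rw [Set.insert_sdiff_singleton, Set.insert_eq_of_mem hw]
    refine ⟨(S \ {w}, w), ⟨(isSplitting_and_adj_iff hT fun h => h.2 rfl).2 ?_, ?_⟩,
      Prod.ext hins rfl⟩
    · rw [hins]
      exact ⟨hS, hleaf⟩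
    · rw [Set.ncard_sdiff_singleton_of_mem hw, hcard, Nat.add_sub_cancel]

theorem ncard_isSplitting [Finite V] (hT : T.IsTree) {n : ℕ} (hn : n + 2 ≤ Nat.card V) :
    {x : Set V × V | IsSplitting T x.1 x.2 ∧ x.1.ncard = n}.ncard =
      {x : Set V × V | (IsBranch T x.1 ∧ x.1.ncard = n) ∧
        x.2 ∉ x.1 ∧ (T.neighborSet x.2).ncard = 1}.ncard +
      {x : Set V × V | (IsBranch T x.1 ∧ x.1.ncard = n + 1) ∧
        x.2 ∈ x.1 ∧ (T.neighborSet x.2 ∩ x.1).ncard = 1}.ncard := by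
  rw [← (bijOn_insert hT.isAcyclic n).ncard_eq,
    ← Set.ncard_inter_add_ncard_sdiff_eq_ncard _ {x : Set V × V | ∃ u ∈ x.1, T.Adj x.2 u},
    add_comm]
  congr 2
  · ext ⟨S, w⟩
    have key (hS : S.ncard = n) (hw : w ∉ S) := isSplitting_and_not_adj_iff hT hw <| by
      rw [← Set.one_lt_ncard_iff_nontrivial, Set.ncard_compl]
      omega
    constructor
    · rintro ⟨⟨h, hS⟩, hadj⟩
      obtain ⟨hb, hleaf⟩ := (key hS h.notMem).1 ⟨h, hadj⟩
      exact ⟨⟨hb, hS⟩, h.notMem, hleaf⟩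
    · rintro ⟨⟨hb, hS⟩, hw, hleaf⟩
      obtain ⟨h, hadj⟩ := (key hS hw).2 ⟨hb, hleaf⟩
      exact ⟨⟨h, hS⟩, hadj⟩
  · exact Set.ext fun x => and_right_comm

end Splittings

section ConnectedPartitions

variable {V : Type*} {T H : SimpleGraph V} {P : Set (Set V)}

/-- The vertex sets of the connected components of a graph. -/
def componentSets (H : SimpleGraph V) : Set (Set V) :=
  Set.range (ConnectedComponent.supp : H.ConnectedComponent → Set V)

/-- A connected partition of a graph: a partition of the vertex set into parts spanning connected
subgraphs. -/
def IsConnectedPartition (T : SimpleGraph V) (P : Set (Set V)) : Prop :=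
  Setoid.IsPartition P ∧ ∀ A ∈ P, (T.induce A).Connected

/-- The subgraph of `T` formed by the edges inside the parts of `P`. -/
def partGraph (T : SimpleGraph V) (P : Set (Set V)) : SimpleGraph V where
  Adj x y := T.Adj x y ∧ ∃ A ∈ P, x ∈ A ∧ y ∈ A
  symm := ⟨fun _ _ ⟨h, A, hA, hx, hy⟩ => ⟨h.symm, A, hA, hy, hx⟩⟩
  loopless := ⟨fun _ h => h.1.ne rfl⟩

theorem partGraph_le : partGraph T P ≤ T := fun _ _ h => h.1

theorem isPartition_componentSets (H : SimpleGraph V) : Setoid.IsPartition (componentSets H) := by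
  refine ⟨fun ⟨C, hC⟩ => C.nonempty_supp.ne_empty hC, fun x =>
    ⟨(H.connectedComponentMk x).supp, ⟨⟨_, rfl⟩, ConnectedComponent.connectedComponentMk_mem⟩, ?_⟩⟩
  rintro _ ⟨⟨C, rfl⟩, hx⟩
  rw [(C.mem_supp_iff x).1 hx]

theorem isConnectedPartition_componentSets (hle : H ≤ T) :
    IsConnectedPartition T (componentSets H) := by
  refine ⟨isPartition_componentSets H, ?_⟩
  rintro _ ⟨C, rfl⟩
  exact C.maximal_connected_induce_supp.prop.mono (comap_monotone _ hle)

theorem partGraph_componentSets (hT : T.IsAcyclic) (hle : H ≤ T) :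
    partGraph T (componentSets H) = H := by
  ext x y
  constructor
  · rintro ⟨hxy, _, ⟨C, rfl⟩, hx, hy⟩
    exact adj_of_reachable_of_le hT hle hxy (C.reachable_of_mem_supp hx hy)
  · intro hxy
    exact ⟨hle hxy, _, ⟨H.connectedComponentMk x, rfl⟩, ConnectedComponent.connectedComponentMk_mem,
      ConnectedComponent.sound hxy.symm.reachable⟩

theorem IsConnectedPartition.componentSets_partGraph (hP : IsConnectedPartition T P) :
    componentSets (partGraph T P) = P := by
  have hsub : P ⊆ componentSets (partGraph T P) := by
    refine fun A hA => exists_supp_eq_iff.2 ⟨(hP.2 A hA).mono fun x y hxy => ?_, ?_⟩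
    · exact ⟨hxy, A, hA, x.2, y.2⟩
    · rintro x hx y ⟨-, B, hB, hxB, hyB⟩
      rwa [(hP.1.2 x).unique ⟨hA, hx⟩ ⟨hB, hxB⟩]
  refine Set.Subset.antisymm (fun A hA => ?_) hsub
  obtain ⟨x, hx⟩ := Setoid.nonempty_of_mem_partition (isPartition_componentSets _) hA
  obtain ⟨B, ⟨hB, hxB⟩, -⟩ := hP.1.2 x
  rwa [((isPartition_componentSets _).2 x).unique ⟨hA, hx⟩ ⟨hsub hB, hxB⟩]

theorem bijOn_componentSets (hT : T.IsAcyclic) :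
    Set.BijOn componentSets {H | H ≤ T} {P | IsConnectedPartition T P} :=
  Set.InvOn.bijOn (f' := partGraph T)
    ⟨fun _ hle => partGraph_componentSets hT hle, fun _ hP => hP.componentSets_partGraph⟩
    (fun _ hle => isConnectedPartition_componentSets hle) fun _ _ => partGraph_le

end ConnectedPartitions

section Coefficients

/-- The multiset of orders of a family of vertex sets. -/
noncomputable def partOrders {V : Type*} [Finite V] (P : Set (Set V)) : Multiset ℕ :=
  P.toFinite.toFinset.val.map Set.ncard

theorem compSizes_eq_partOrders {V : Type} [Fintype V] (H : SimpleGraph V) :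
    compSizes H = partOrders (componentSets H) := by
  classical
  have h : (componentSets H).toFinite.toFinset =
      (Finset.univ.image H.connectedComponentMk).map
        ⟨ConnectedComponent.supp, ConnectedComponent.supp_injective⟩ := by
    ext A
    simp only [componentSets, Set.Finite.mem_toFinset, Set.mem_range, Finset.mem_map,
      Finset.mem_image, Finset.mem_univ, true_and, Function.Embedding.coeFn_mk,
      exists_exists_eq_and]
    exact ConnectedComponent.exists
  rw [partOrders, h, Finset.map_val, Multiset.map_map, compSizes]
  congr!

theorem bijOn_fromEdgeSet {V : Type*} (G : SimpleGraph V) :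
    Set.BijOn fromEdgeSet {F | F ⊆ G.edgeSet} {H | H ≤ G} := by
  refine Set.InvOn.bijOn (f' := edgeSet) ⟨fun F hF => ?_, fun H _ => fromEdgeSet_edgeSet H⟩
    (fun F hF => (fromEdgeSet_le G).2 (Set.sdiff_subset.trans hF)) fun _ => edgeSet_mono
  rw [edgeSet_fromEdgeSet, sdiff_eq_left]
  exact Set.subset_compl_iff_disjoint_right.1 (hF.trans G.edgeSet_subset_compl_diagSet)

theorem cCoeff_eq_ncard {V : Type} [Fintype V] {T : SimpleGraph V} (hT : T.IsAcyclic)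
    (lam : Multiset ℕ) :
    cCoeff T lam = {P | IsConnectedPartition T P ∧ partOrders P = lam}.ncard := by
  have hbij := (bijOn_componentSets hT).comp (bijOn_fromEdgeSet T)
  refine (hbij.inter_mapsTo (s₂ := {F | compSizes (fromEdgeSet F) = lam})
    (t₂ := {P | partOrders P = lam}) ?_ ?_).ncard_eq
  · exact fun F hF => (compSizes_eq_partOrders _).symm.trans hF
  · exact fun F hF => (compSizes_eq_partOrders _).trans hF.2

theorem partOrders_eq_iff {V : Type*} [Finite V] {P : Set (Set V)} {a b c : ℕ} :
    partOrders P = {a, b, c} ↔ ∃ A B C, A ≠ B ∧ A ≠ C ∧ B ≠ C ∧ P = {A, B, C} ∧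
      A.ncard = a ∧ B.ncard = b ∧ C.ncard = c := by
  classical
  constructor
  · intro h
    obtain ⟨A, hA, rfl, hA'⟩ := (Multiset.map_eq_cons _ _ _ _).2 h
    obtain ⟨B, hB, rfl, hB'⟩ := (Multiset.map_eq_cons _ _ _ _).2 hA'
    obtain ⟨C, hC, rfl⟩ := Multiset.map_eq_singleton.1 hB'
    have hval : P.toFinite.toFinset.val = {A, B, C} := by
      rw [← Multiset.cons_erase hA, ← Multiset.cons_erase hB, hC]
      rfl
    have hnodup := hval ▸ P.toFinite.toFinset.nodup
    simp only [Multiset.insert_eq_cons, Multiset.nodup_cons, Multiset.mem_cons,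
      Multiset.mem_singleton, not_or] at hnodup
    refine ⟨A, B, C, hnodup.1.1, hnodup.1.2, hnodup.2.1, ?_, rfl, rfl, rfl⟩
    ext X
    rw [← P.toFinite.mem_toFinset, ← Finset.mem_val, hval]
    simp
  · rintro ⟨A, B, C, hAB, hAC, hBC, rfl, rfl, rfl, rfl⟩
    have h : ({A, B, C} : Set (Set V)).toFinite.toFinset = {A, B, C} := by
      ext
      simp
    rw [partOrders, h, Finset.insert_val_of_notMem (by simp [hAB, hAC]),
      Finset.insert_val_of_notMem (by simpa using hBC)]
    rfl

end Coefficients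

section SplittingParts

variable {V : Type*} {T : SimpleGraph V} {S : Set V} {w : V}

/-- The three parts of the splitting `(S, w)`. -/
def splittingParts (x : Set V × V) : Set (Set V) := {(insert x.2 x.1)ᶜ, x.1, {x.2}}

theorem IsSplitting.isConnectedPartition (h : IsSplitting T S w) :
    IsConnectedPartition T (splittingParts (S, w)) := by
  have hnonempty {A : Set V} (hA : (T.induce A).Connected) : A ≠ ∅ :=
    (Set.nonempty_coe_sort.1 hA.nonempty).ne_empty
  have hw : (T.induce {w}).Connected := ⟨Preconnected.of_subsingleton⟩
  have hconn : ∀ A ∈ splittingParts (S, w), (T.induce A).Connected := by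
    rintro _ (rfl | rfl | rfl)
    exacts [h.connected_compl, h.connected, hw]
  refine ⟨⟨fun h => hnonempty (hconn _ h) rfl, fun x => ?_⟩, hconn⟩
  have hwS := h.notMem
  by_cases hxS : x ∈ S
  · refine ⟨S, by simp [splittingParts, hxS], ?_⟩
    rintro _ ⟨rfl | rfl | rfl, hx⟩ <;> grind
  · by_cases hxw : x = w
    · refine ⟨{w}, by simp [splittingParts, hxw], ?_⟩
      rintro _ ⟨rfl | rfl | rfl, hx⟩ <;> grind
    · refine ⟨(insert w S)ᶜ, by simp [splittingParts, hxS, hxw], ?_⟩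
      rintro _ ⟨rfl | rfl | rfl, hx⟩ <;> grind

theorem ncard_compl_insert [Finite V] (hw : w ∉ S) :
    (insert w S)ᶜ.ncard = Nat.card V - S.ncard - 1 := by
  rw [Set.ncard_compl, Set.ncard_insert_of_notMem hw, Nat.sub_add_eq]

theorem IsSplitting.partOrders_splittingParts [Finite V] (h : IsSplitting T S w) :
    partOrders (splittingParts (S, w)) = {Nat.card V - S.ncard - 1, S.ncard, 1} := by
  obtain ⟨u, hu⟩ := Set.nonempty_coe_sort.1 h.connected.nonempty
  exact partOrders_eq_iff.2 ⟨_, S, {w}, (ne_of_mem_of_not_mem' hu (by simp [hu])).symm,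
    (ne_of_mem_of_not_mem' (Set.mem_singleton w) (by simp)).symm,
    (ne_of_mem_of_not_mem' (Set.mem_singleton w) h.notMem).symm, rfl,
    ncard_compl_insert h.notMem, rfl, Set.ncard_singleton w⟩

theorem IsConnectedPartition.exists_isSplitting [Finite V] {P : Set (Set V)}
    (hP : IsConnectedPartition T P) {a n : ℕ} (h : partOrders P = {a, n, 1}) :
    ∃ S w, IsSplitting T S w ∧ S.ncard = n ∧ splittingParts (S, w) = P := by
  obtain ⟨A, S, W, hAS, hAW, hSW, rfl, -, rfl, hW⟩ := partOrders_eq_iff.1 h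
  obtain ⟨w, rfl⟩ := Set.ncard_eq_one.1 hW
  have hdisj := hP.1.pairwiseDisjoint
  have hwS : w ∉ S := Set.disjoint_singleton_right.1 (hdisj (by simp) (by simp) hSW)
  have hA : A = (insert w S)ᶜ := by
    refine eq_compl_iff_isCompl.2 ⟨?_, ?_⟩
    · exact Set.disjoint_insert_right.2
        ⟨Set.disjoint_singleton_right.1 (hdisj (by simp) (by simp) hAW),
          hdisj (by simp) (by simp) hAS⟩
    · have := hP.1.sUnion_eq_univ
      rw [Set.sUnion_insert, Set.sUnion_pair, Set.union_singleton] at this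
      exact codisjoint_iff.2 this
  subst hA
  exact ⟨S, w, ⟨hwS, hP.2 _ (by simp), hP.2 _ (by simp)⟩, rfl, rfl⟩

theorem bijOn_splittingParts [Finite V] {n : ℕ} (hn : 2 ≤ n) (hcard : n + 3 ≤ Nat.card V)
    (hne : Nat.card V ≠ 2 * n + 1) :
    Set.BijOn splittingParts {x : Set V × V | IsSplitting T x.1 x.2 ∧ x.1.ncard = n}
      {P | IsConnectedPartition T P ∧ partOrders P = {Nat.card V - n - 1, n, 1}} := by
  refine ⟨?_, ?_, ?_⟩
  · rintro ⟨S, w⟩ ⟨h, rfl⟩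
    exact ⟨h.isConnectedPartition, h.partOrders_splittingParts⟩
  · rintro ⟨S, w⟩ ⟨h, hS : S.ncard = n⟩ ⟨S', w'⟩ ⟨-, hS' : S'.ncard = n⟩ heq
    have hcompl : (insert w S)ᶜ.ncard = Nat.card V - n - 1 := hS ▸ ncard_compl_insert h.notMem
    have hmem {A : Set V} (hA : A ∈ splittingParts (S', w')) :
        A = (insert w S)ᶜ ∨ A = S ∨ A = {w} := heq.ge hA
    have hSS : S' = S := by
      rcases hmem (Or.inr (Or.inl rfl)) with h | (h : S' = S) | (h : S' = {w})
      · rw [show S' = _ from h] at hS'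
        omega
      · exact h
      · rw [h, Set.ncard_singleton] at hS'
        omega
    have hww : {w'} = ({w} : Set V) := by
      have hw' : ({w'} : Set V).ncard = 1 := Set.ncard_singleton w'
      rcases hmem (Or.inr (Or.inr rfl)) with h | h | h
      · rw [h] at hw'
        omega
      · rw [h] at hw'
        omega
      · exact h
    rw [hSS, Set.singleton_injective hww]
  · rintro P ⟨hP, hPn⟩
    obtain ⟨S, w, h, hS, rfl⟩ := hP.exists_isSplitting hPn
    exact ⟨(S, w), ⟨h, hS⟩, rfl⟩

end SplittingParts

section Counting

variable {α β γ : Type*}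

theorem sum_ncard_section [Fintype α] [Finite β] (Q : α → β → Prop) :
    ∑ a, {b | Q a b}.ncard = {x : α × β | Q x.1 x.2}.ncard :=
  (Nat.card_sigma (β := fun a => {b | Q a b})).symm.trans
    (Nat.card_congr (Equiv.setProdEquivSigma {x : α × β | Q x.1 x.2}).symm)

theorem sum_mul_ncard_section {R : Type*} [Fintype α] [Finite β] [Finite γ]
    [CommSemiring R] {s : Set (α × β)} {Q : α × β → γ → Prop} {k : α → R}
    (hk : ∀ x ∈ s, k x.1 = {c | Q x c}.ncard) :
    ∑ a, k a * {b | (a, b) ∈ s}.ncard = {y : (α × β) × γ | y.1 ∈ s ∧ Q y.1 y.2}.ncard := by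
  classical
  have := Fintype.ofFinite β
  have hterm (a : α) (b : β) :
      ({c | (a, b) ∈ s ∧ Q (a, b) c}.ncard : R) = if (a, b) ∈ s then k a else 0 := by
    split_ifs with h
    · simp [h, hk _ h]
    · simp [h]
  rw [← sum_ncard_section fun x c => x ∈ s ∧ Q x c, Nat.cast_sum, Fintype.sum_prod_type]
  refine Finset.sum_congr rfl fun a _ => Eq.symm ?_
  rw [Finset.sum_congr rfl fun b _ => hterm a b, ← Finset.sum_filter, Finset.sum_const,
    nsmul_eq_mul, mul_comm, Set.ncard_eq_toFinset_card', Set.toFinset_ofPred]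

theorem ncard_section_of_bijOn {f : α → β} {s : Set α} {t : Set β}
    (hf : Set.BijOn f s t) (Q : β → γ → Prop) :
    {x : α × γ | x.1 ∈ s ∧ Q (f x.1) x.2}.ncard = {x : β × γ | x.1 ∈ t ∧ Q x.1 x.2}.ncard := by
  refine Set.BijOn.ncard_eq (f := Prod.map f id) ⟨?_, ?_, ?_⟩
  · rintro ⟨a, c⟩ ⟨ha, hc⟩
    exact ⟨hf.mapsTo ha, hc⟩
  · rintro ⟨a, c⟩ ⟨ha, -⟩ ⟨a', c'⟩ ⟨ha', -⟩ heq
    obtain ⟨h, rfl⟩ := Prod.mk.inj heq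
    exact congrArg (·, c) (hf.injOn ha ha' h)
  · rintro ⟨b, c⟩ ⟨hb, hc⟩
    obtain ⟨a, ha, rfl⟩ := hf.surjOn hb
    exact ⟨(a, c), ⟨ha, hc⟩, rfl⟩

end Counting

section IsomorphismClasses

variable {V : Type} {T : SimpleGraph V} {m : ℕ}

theorem isRootedSubtree_iff (hT : T.IsAcyclic) {W : Type} {e : Sym2 V} {v : V}
    {R : SimpleGraph W} {r : W} :
    IsRootedSubtree T e v R r ↔ e ∈ T.edgeSet ∧ v ∈ e ∧
      ∃ φ : R ≃g T.induce (edgeSide T e v), (φ r : V) = v := by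
  refine and_congr_right fun he => and_congr_right fun hv => ?_
  rw [← induce_deleteEdges_edgeSide hT he hv]
  rfl

theorem ncard_edgeSide_of_isRootedSubtree {e : Sym2 V} {v : V} {R : SimpleGraph (Fin m)}
    {r : Fin m} (h : IsRootedSubtree T e v R r) : (edgeSide T e v).ncard = m := by
  obtain ⟨-, -, φ, -⟩ := h
  exact (Nat.card_congr φ.toEquiv).symm.trans (Nat.card_fin m)

theorem exists_isRootedSubtree [Finite V] (hT : T.IsAcyclic) {e : Sym2 V} {v : V}
    (he : e ∈ T.edgeSet) (hv : v ∈ e) (hm : (edgeSide T e v).ncard = m) :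
    ∃ q : RTreeClass m, IsRootedSubtree T e v q.out.1.1 q.out.1.2 := by
  let σ : edgeSide T e v ≃ Fin m := Finite.equivFinOfCardEq hm
  let ψ := Iso.map σ (T.induce (edgeSide T e v))
  have htree : (T.induce (edgeSide T e v)).IsTree :=
    ⟨connected_induce_edgeSide e v, hT.induce _⟩
  let R : RTree m := ⟨(_, σ ⟨v, self_mem_edgeSide e v⟩), ψ.isTree_iff.1 htree⟩
  obtain ⟨χ, hχ⟩ : (rootedSetoid m).r (Quotient.mk (rootedSetoid m) R).out R :=
    Quotient.exact (Quotient.out_eq _)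
  refine ⟨Quotient.mk _ R, (isRootedSubtree_iff hT).2 ⟨he, hv, χ.trans ψ.symm, ?_⟩⟩
  have hroot : ψ.symm (χ (Quotient.mk (rootedSetoid m) R).out.1.2) = ⟨v, self_mem_edgeSide e v⟩ :=
    (congrArg ψ.symm hχ).trans (σ.symm_apply_apply _)
  exact congrArg Subtype.val hroot

theorem eq_of_isRootedSubtree {e : Sym2 V} {v : V} {q q' : RTreeClass m}
    (h : IsRootedSubtree T e v q.out.1.1 q.out.1.2)
    (h' : IsRootedSubtree T e v q'.out.1.1 q'.out.1.2) : q = q' := by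
  obtain ⟨-, -, φ, hφ⟩ := h
  obtain ⟨-, -, ψ, hψ⟩ := h'
  refine Quotient.out_equiv_out.1 ⟨φ.trans ψ.symm, ?_⟩
  rw [RelIso.trans_apply, show φ q.out.1.2 = ψ q'.out.1.2 from Subtype.ext (hφ.trans hψ.symm),
    RelIso.symm_apply_apply]

theorem bijOn_isRootedSubtree [Finite V] (hT : T.IsTree) :
    Set.BijOn (fun x : RTreeClass m × Sym2 V × V => edgeSide T x.2.1 x.2.2)
      {x | IsRootedSubtree T x.2.1 x.2.2 x.1.out.1.1 x.1.out.1.2}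
      {S | IsBranch T S ∧ S.ncard = m} := by
  refine ⟨?_, ?_, ?_⟩
  · rintro ⟨q, e, v⟩ h
    exact ⟨(bijOn_edgeSide hT).mapsTo ⟨h.1, h.2.1⟩, ncard_edgeSide_of_isRootedSubtree h⟩
  · rintro ⟨q, p⟩ h ⟨q', p'⟩ h' heq
    obtain rfl : p = p' := (bijOn_edgeSide hT).injOn ⟨h.1, h.2.1⟩ ⟨h'.1, h'.2.1⟩ heq
    exact congrArg (·, p) (eq_of_isRootedSubtree h h')
  · rintro S ⟨hS, hm⟩
    obtain ⟨⟨e, v⟩, ⟨he, hv⟩, rfl⟩ := (bijOn_edgeSide hT).surjOn hS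
    obtain ⟨q, hq⟩ := exists_isRootedSubtree hT.isAcyclic he hv hm
    exact ⟨(q, e, v), hq, rfl⟩

theorem sum_mul_rhoClass [Fintype V] (hT : T.IsTree) {f : RTreeClass m → ℤ}
    {P : Set V → V → Prop}
    (hf : ∀ q e v, IsRootedSubtree T e v q.out.1.1 q.out.1.2 →
      f q = {w | P (edgeSide T e v) w}.ncard) :
    ∑ q, f q * rhoClass T q =
      {x : Set V × V | (IsBranch T x.1 ∧ x.1.ncard = m) ∧ P x.1 x.2}.ncard := by
  let A : Set (RTreeClass m × Sym2 V × V) :=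
    {x | IsRootedSubtree T x.2.1 x.2.2 x.1.out.1.1 x.1.out.1.2}
  have hsum : ∑ q, f q * rhoClass T q =
      {y : (RTreeClass m × Sym2 V × V) × V | y.1 ∈ A ∧ P (edgeSide T y.1.2.1 y.1.2.2) y.2}.ncard :=
    sum_mul_ncard_section (s := A) (Q := fun x => P (edgeSide T x.2.1 x.2.2))
      fun x hx => hf x.1 x.2.1 x.2.2 hx
  exact hsum.trans (congrArg Nat.cast (ncard_section_of_bijOn (bijOn_isRootedSubtree hT) P))

end IsomorphismClasses

section InducedNeighbors

variable {V W : Type*} {R : SimpleGraph W} {T : SimpleGraph V} {S : Set V}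

theorem ncard_setOf_eq_of_iso (φ : R ≃g T.induce S) (P : V → Prop) :
    {r | P (φ r)}.ncard = {w | w ∈ S ∧ P w}.ncard := by
  have hφ : Function.Injective fun r => (φ r : V) := Subtype.val_injective.comp φ.injective
  rw [← Set.ncard_image_of_injective _ hφ]
  congr 1
  ext w
  constructor
  · rintro ⟨r, hr, rfl⟩
    exact ⟨(φ r).2, hr⟩
  · rintro ⟨hwS, hw⟩
    refine ⟨φ.symm ⟨w, hwS⟩, ?_, ?_⟩ <;> simp [hw]

theorem ncard_neighborSet_of_iso (φ : R ≃g T.induce S) (r : W) :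
    (R.neighborSet r).ncard = (T.neighborSet (φ r) ∩ S).ncard := by
  have h := ncard_setOf_eq_of_iso φ (T.Adj (φ r))
  rw [Set.inter_comm]
  refine (congrArg Set.ncard (Set.ext fun s => ?_)).trans h
  exact φ.map_adj_iff.symm

theorem ncard_neighborSet_ne_one_of_adj {u b v : V} (hu : T.Adj v u) (hb : T.Adj v b)
    (hne : u ≠ b) : (T.neighborSet v).ncard ≠ 1 := fun h => by
  obtain ⟨z, hz⟩ := Set.ncard_eq_one.1 h
  have hmem {x : V} (hx : T.Adj v x) : x = z := Set.mem_singleton_iff.1 (hz ▸ hx)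
  exact hne ((hmem hu).trans (hmem hb).symm)

end InducedNeighbors

section LeafCounts

variable {V : Type} {T : SimpleGraph V} {S : Set V}

theorem leafCount_of_iso {W : Type} [Fintype W] {R : SimpleGraph W} (φ : R ≃g T.induce S) :
    leafCount R = {w | w ∈ S ∧ (T.neighborSet w ∩ S).ncard = 1}.ncard := by
  simp only [leafCount, ncard_neighborSet_of_iso φ]
  exact ncard_setOf_eq_of_iso φ fun w => (T.neighborSet w ∩ S).ncard = 1

theorem nonRootLeafCount_of_iso (hT : T.IsAcyclic) {m : ℕ} {R : RTree m} {v b : V}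
    (hvb : T.Adj v b) (hnt : (edgeSide T s(v, b) v).Nontrivial)
    (φ : R.1.1 ≃g T.induce (edgeSide T s(v, b) v)) (hφ : (φ R.1.2 : V) = v) :
    nonRootLeafCount R =
      {w | w ∈ edgeSide T s(v, b) v ∧ (T.neighborSet w).ncard = 1}.ncard := by
  rw [nonRootLeafCount, ← ncard_setOf_eq_of_iso φ]
  congr 1
  ext r
  rw [Set.mem_ofPred_eq, Set.mem_ofPred_eq, ncard_neighborSet_of_iso φ]
  by_cases hr : r = R.1.2
  · obtain ⟨u, hu, hvu⟩ := exists_adj_mem (connected_induce_edgeSide _ _) hnt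
      (self_mem_edgeSide s(v, b) v)
    subst hr
    rw [hφ]
    exact iff_of_false (fun h => h.1 rfl) (ncard_neighborSet_ne_one_of_adj hvu hvb
      (ne_of_mem_of_not_mem hu (notMem_edgeSide hT hvb)))
  · have hφr : (φ r : V) ≠ v := fun h => hr (φ.injective (Subtype.ext (h.trans hφ.symm)))
    have hsub : T.neighborSet (φ r) ⊆ edgeSide T s(v, b) v := fun y hy => by
      by_contra hyS
      exact hφr (eq_and_eq_of_adj_of_mem_of_notMem hT hvb hy (φ r).2 hyS).1
    rw [Set.inter_eq_left.2 hsub]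
    exact and_iff_right hr

theorem leafCount_sub_nonRootLeafCount [Fintype V] (hT : T.IsAcyclic) {m : ℕ} (hm : 2 ≤ m)
    {R : RTree m} {e : Sym2 V} {v : V} (h : IsRootedSubtree T e v R.1.1 R.1.2) :
    (leafCount T : ℤ) - nonRootLeafCount R =
      {w | w ∉ edgeSide T e v ∧ (T.neighborSet w).ncard = 1}.ncard := by
  have hnt : (edgeSide T e v).Nontrivial :=
    Set.one_lt_ncard_iff_nontrivial.1 ((ncard_edgeSide_of_isRootedSubtree h).symm ▸ hm)
  obtain ⟨he, hv, φ, hφ⟩ := (isRootedSubtree_iff hT).1 h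
  obtain ⟨b, hvb, rfl⟩ := exists_adj_eq_mk he hv
  rw [sub_eq_iff_eq_add', nonRootLeafCount_of_iso hT hvb hnt φ hφ, leafCount,
    ← Set.ncard_inter_add_ncard_sdiff_eq_ncard _ (edgeSide T s(v, b) v), Nat.cast_add,
    Set.inter_comm, Set.sdiff_eq_compl_inter]
  rfl

end LeafCounts

theorem cn1_formula_general {V : Type} [Fintype V] (T : SimpleGraph V) (hT : T.IsTree)
    (d : ℕ) (hd : Fintype.card V = d) (n : ℕ) (hn : 2 ≤ n) (hnd : n + 3 ≤ d)
    (hne : d ≠ 2 * n + 1) :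
    (cCoeff T {d - n - 1, n, 1} : ℤ) =
      (∑ q : RTreeClass n,
        ((leafCount T : ℤ) - (nonRootLeafCount q.out : ℤ)) * (rhoClass T q : ℤ)) +
      ∑ q : RTreeClass (n + 1),
        (leafCount q.out.1.1 : ℤ) * (rhoClass T q : ℤ) := by
  obtain rfl : Nat.card V = d := Nat.card_eq_fintype_card.trans hd
  have hbranch := sum_mul_rhoClass (m := n) hT
    (P := fun S w => w ∉ S ∧ (T.neighborSet w).ncard = 1)
    fun _ _ _ h => leafCount_sub_nonRootLeafCount hT.isAcyclic hn h
  have hinsert := sum_mul_rhoClass (m := n + 1) hT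
    (P := fun S w => w ∈ S ∧ (T.neighborSet w ∩ S).ncard = 1)
    fun q _ _ h => congrArg Nat.cast <|
      let ⟨_, _, φ, _⟩ := (isRootedSubtree_iff hT.isAcyclic).1 h
      leafCount_of_iso φ
  rw [hbranch, hinsert, cCoeff_eq_ncard hT.isAcyclic, ← (bijOn_splittingParts hn hnd hne).ncard_eq,
    ncard_isSplitting hT (by omega), Nat.cast_add]

/-- Lemma 1, equation (2): for a tree `T` of order `d` and `2 ≤ n < (d-1)/2`,
`c_{n,1} = ∑_R (L(T) - L₀(R))·ρ_R(T) + ∑_{R'} L(T_{R'})·ρ_{R'}(T)`,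
the first sum over isomorphism classes of rooted trees of order `n`, the second over
isomorphism classes of rooted trees of order `n + 1`. -/
theorem cn1_formula {V : Type} [Fintype V] (T : SimpleGraph V) (hT : T.IsTree)
    (d : ℕ) (hd : Fintype.card V = d) (n : ℕ) (hn2 : 2 ≤ n) (hn : 2 * n + 1 < d) :
    (cCoeff T {d - n - 1, n, 1} : ℤ) =
      (∑ q : RTreeClass n,
        ((leafCount T : ℤ) - (nonRootLeafCount q.out : ℤ)) * (rhoClass T q : ℤ)) +
      ∑ q : RTreeClass (n + 1),
        (leafCount q.out.1.1 : ℤ) * (rhoClass T q : ℤ) :=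
  cn1_formula_general T hT d hd n hn2 (by omega) (by omega)
end

section
/- If T₁ and T₂ are 2-spiders of the same order d such that c_λ(T₁) = c_λ(T₂) for every partition λ of d (equivalently, such that T₁ and T₂ have equal chromatic symmetric functions), then T₁ and T₂ are isomorphic as graphs. -/
open SimpleGraph

/-- The order of the "leg" of `T` at `u` hanging off the vertex `t`: the number of vertices
of the connected component of `u` after deleting the edge `{t, u}`. -/
noncomputable def legOrder {V : Type} (T : SimpleGraph V) (t u : V) : ℕ :=
  ((T.deleteEdges {s(t, u)}).connectedComponentMk u).supp.ncard

/-- The leg of `T` at `u` (hanging off `t`) is a 1-leg: the component of `u` in `T − t`,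
rooted at `u`, is isomorphic to some `R_{n,1}`, i.e. a path rooted at a leaf. -/
def IsOneLegAt {V : Type} (T : SimpleGraph V) (t u : V) : Prop :=
  ∃ n : ℕ, ∃ h : 0 < n, IsRootedSubtree T s(t, u) u (SimpleGraph.pathGraph n) ⟨0, h⟩

/-- The leg of `T` at `u` (hanging off `t`) is a 2-leg: the component of `u` in `T − t`,
rooted at `u`, is isomorphic to some `R_{n,2}` with `n ≥ 3`. -/
def IsTwoLegAt {V : Type} (T : SimpleGraph V) (t u : V) : Prop :=
  ∃ n : ℕ, ∃ h : 3 ≤ n, IsRootedSubtree T s(t, u) u (Rtwo n) ⟨0, by omega⟩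

/-- `T` is a 2-spider with torso `t`: `T` is a tree, `t` has degree at least 3, and every
connected component of `T − t`, rooted at its vertex adjacent to `t`, is isomorphic as a
rooted tree to some `R_{n,1}` (a 1-leg) or to some `R_{n,2}` with `n ≥ 3` (a 2-leg). -/
def IsTwoSpiderWithTorso {V : Type} (T : SimpleGraph V) (t : V) : Prop :=
  T.IsTree ∧ 3 ≤ (T.neighborSet t).ncard ∧
    ∀ u : V, T.Adj t u → IsOneLegAt T t u ∨ IsTwoLegAt T t u

/-- `T` is a 2-spider. -/
def IsTwoSpider {V : Type} (T : SimpleGraph V) : Prop :=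
  ∃ t : V, IsTwoSpiderWithTorso T t

/-- `T`, as a 2-spider with torso `t`, has exactly three legs, two of which have order one. -/
def ThreeLegsTwoSingletons {V : Type} (T : SimpleGraph V) (t : V) : Prop :=
  (T.neighborSet t).ncard = 3 ∧
  ∃ u₁ u₂ : V, u₁ ≠ u₂ ∧ T.Adj t u₁ ∧ T.Adj t u₂ ∧
    legOrder T t u₁ = 1 ∧ legOrder T t u₂ = 1

/-!
Root each 2-spider at its torso, so that its edges correspond to the subtrees they cut off.
The coefficients `c_(d-k,k)` determine, for each `k`, how many subtrees have `k` or `d - k`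
vertices. The coefficient `c_(3,1,…,1)` counts paths of three vertices, and combined with the
number of leaves it gives the degree of the torso and the number of 2-legs. As at most one leg
contains half of the vertices, the number of legs of order at least `k` follows for every `k`.
The coefficients `c_(d-1-k,k,1)` involve the pairs of a leaf and a subtree of `k` or `k + 1`
vertices above it, which yields the number of 2-legs of order at least `k + 1` from the number of
those of order at least `k`, unless a leg longer than `k` takes up so much of the tree that the two
numbers agree anyway.
-/

section

open Finset

open scoped Classical

section Coefficients

variable {V W : Type} [Fintype V] [Fintype W]

theorem compSizes_eq_map {β : Type} [DecidableEq β] (H : SimpleGraph V) (f : V → β)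
    (hf : ∀ u v, H.Reachable u v ↔ f u = f v) :
    compSizes H = (univ.image f).val.map fun b => #{v | f v = b} := by
  let ψ : H.ConnectedComponent → β :=
    ConnectedComponent.lift f fun u v p _ => (hf u v).1 p.reachable
  have hψ : Function.Injective ψ := by
    refine fun c c' => c.ind fun u => c'.ind fun v h => ?_
    exact ConnectedComponent.eq.2 ((hf u v).2 h)
  have himage : univ.image f = (univ.image H.connectedComponentMk).image ψ := by
    rw [image_image]
    rfl
  rw [himage, image_val_of_injOn hψ.injOn, Multiset.map_map]
  unfold compSizes
  refine Multiset.map_congr (by congr!) fun c _ => ?_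
  rw [Function.comp_apply, ← Set.ncard_coe_finset]
  congr 1
  ext v
  simp only [ConnectedComponent.mem_supp_iff, coe_filter_univ, Set.mem_ofPred_eq]
  exact hψ.eq_iff.symm

theorem compSizes_congr {H : SimpleGraph V} {H' : SimpleGraph W} (φ : H ≃g H') :
    compSizes H = compSizes H' := by
  rw [compSizes_eq_map H (fun v => H'.connectedComponentMk (φ v)) fun u v => by
      rw [ConnectedComponent.eq, φ.reachable_iff],
    compSizes_eq_map H' H'.connectedComponentMk fun u v => ConnectedComponent.eq.symm]
  have himage : (univ.image fun v => H'.connectedComponentMk (φ v)) =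
      univ.image H'.connectedComponentMk := by
    rw [← Function.comp_def, ← image_image, image_univ_of_surjective φ.surjective]
  rw [himage]
  refine Multiset.map_congr rfl fun c _ => card_equiv φ.toEquiv fun v => ?_
  simp

theorem sum_compSizes (H : SimpleGraph V) : (compSizes H).sum = Fintype.card V := by
  rw [compSizes_eq_map H H.connectedComponentMk fun u v => ConnectedComponent.eq.symm]
  exact (card_eq_sum_card_image _ _).symm

theorem pos_of_mem_compSizes {H : SimpleGraph V} {n : ℕ} (hn : n ∈ compSizes H) : 0 < n := by
  rw [compSizes_eq_map H H.connectedComponentMk fun u v => ConnectedComponent.eq.symm] at hn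
  obtain ⟨c, hc, rfl⟩ := Multiset.mem_map.1 hn
  obtain ⟨v, -, rfl⟩ := mem_image.1 hc
  exact card_pos.2 ⟨v, by simp⟩

theorem cCoeff_congr {G : SimpleGraph V} {G' : SimpleGraph W} (φ : G ≃g G') :
    cCoeff G = cCoeff G' := by
  funext lam
  have hφ : Function.Injective (Sym2.map φ) := Sym2.map.injective φ.injective
  have hsizes (F : Set (Sym2 V)) :
      compSizes (fromEdgeSet (Sym2.map φ '' F)) = compSizes (fromEdgeSet F) := by
    refine (compSizes_congr ⟨φ.toEquiv, fun {u v} => ?_⟩).symm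
    simp only [fromEdgeSet_adj, ne_eq, φ.toEquiv.injective.eq_iff]
    exact and_congr_left' (hφ.mem_set_image (s := F) (a := s(u, v)))
  have hedges (e : Sym2 V) : Sym2.map φ e ∈ G'.edgeSet ↔ e ∈ G.edgeSet := by
    induction e with
    | h u v => exact φ.map_adj_iff
  refine Set.ncard_congr (fun F _ => Sym2.map φ '' F) ?_ (fun F F' _ _ h => ?_) ?_
  · rintro F ⟨hF, rfl⟩
    exact ⟨Set.image_subset_iff.2 fun e he => (hedges e).2 (hF he), hsizes F⟩
  · exact hφ.image_injective h
  · rintro F ⟨hF, rfl⟩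
    have hsurj : Function.Surjective (Sym2.map φ) :=
      Function.RightInverse.surjective (g := Sym2.map φ.symm) fun e => by simp [Sym2.map_map]
    have himage : Sym2.map φ '' (Sym2.map φ ⁻¹' F) = F := Set.image_preimage_eq F hsurj
    refine ⟨Sym2.map φ ⁻¹' F, ⟨fun e he => (hedges e).1 (hF he), ?_⟩, himage⟩
    rw [← hsizes, himage]

theorem cCoeff_eq_zero {G : SimpleGraph V} {lam : Multiset ℕ}
    (h : (∀ i ∈ lam, 0 < i) → lam.sum ≠ Fintype.card V) : cCoeff G lam = 0 := by
  refine Set.ncard_eq_zero (Set.toFinite _) |>.2 (Set.eq_empty_of_forall_notMem ?_)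
  rintro F ⟨-, rfl⟩
  exact h (fun _ => pos_of_mem_compSizes) (sum_compSizes _)

theorem cCoeff_eq_of_forall_partition {G : SimpleGraph V} {G' : SimpleGraph W}
    (hcard : Fintype.card V = Fintype.card W)
    (h : ∀ lam : Multiset ℕ, (∀ i ∈ lam, 0 < i) → lam.sum = Fintype.card V →
      cCoeff G lam = cCoeff G' lam) :
    cCoeff G = cCoeff G' := by
  funext lam
  by_cases hlam : (∀ i ∈ lam, 0 < i) ∧ lam.sum = Fintype.card V
  · exact h lam hlam.1 hlam.2
  · rw [not_and] at hlam
    rw [cCoeff_eq_zero hlam, cCoeff_eq_zero (hcard ▸ hlam)]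

theorem card_eq_of_cCoeff_eq {G : SimpleGraph V} {G' : SimpleGraph W} (h : cCoeff G = cCoeff G') :
    Fintype.card V = Fintype.card W := by
  by_contra hne
  have hzero : cCoeff G (compSizes (fromEdgeSet ∅ : SimpleGraph V)) = 0 := by
    rw [h]
    exact cCoeff_eq_zero fun _ => (sum_compSizes _).trans_ne hne
  refine Set.ncard_ne_zero_of_mem (a := ∅) ?_ (Set.toFinite _) hzero
  exact ⟨Set.empty_subset _, rfl⟩

end Coefficients

/-- A finite tree on `Option X` rooted at `none`, encoded by the parent of each non-root vertex;
its edges are thereby indexed by `X`. -/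
structure ParentTree (X : Type) where
  /-- The neighbour of `some x` on the way to the root. -/
  parent : X → Option X
  wf : WellFounded fun y x => parent x = some y

namespace ParentTree

variable {X : Type} (R : ParentTree X)

/-- The edge joining `some x` to its parent. -/
def edge (x : X) : Sym2 (Option X) := s(some x, R.parent x)

/-- The underlying unrooted tree. -/
def graph : SimpleGraph (Option X) := fromEdgeSet (Set.range R.edge)

/-- The forest left after removing the edges indexed by `C`. -/
def cut (C : Finset X) : SimpleGraph (Option X) := fromEdgeSet (R.edge '' (C : Set X)ᶜ)

/-- `R.Descends x y` means that `x` is in the subtree rooted at `y`. -/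
def Descends (x y : X) : Prop := Relation.ReflTransGen (fun a b => R.parent a = some b) x y

/-- The children of a vertex. -/
noncomputable def children [Fintype X] (o : Option X) : Finset X := {x | R.parent x = o}

/-- The number of vertices of the subtree rooted at `some x`. -/
noncomputable def subtreeSize [Fintype X] (x : X) : ℕ := #{y | R.Descends y x}

/-- The edges of `C` crossed on the way from a vertex to the root. They identify the component of
the vertex in `R.cut C`. -/
noncomputable def cutAncestors (C : Finset X) : Option X → Finset X
  | none => ∅
  | some x => {c ∈ C | R.Descends x c}

/-- The number of vertices of the component of `R.cut C` whose highest vertex is `some c`. -/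
noncomputable def branchSize [Fintype X] (C : Finset X) (c : X) : ℕ :=
  #{x | R.Descends x c ∧ ∀ c' ∈ C, R.Descends x c' → R.Descends c c'}

variable {R}

theorem Descends.refl (x : X) : R.Descends x x := Relation.ReflTransGen.refl

theorem Descends.trans {x y z : X} (hxy : R.Descends x y) (hyz : R.Descends y z) :
    R.Descends x z :=
  Relation.ReflTransGen.trans hxy hyz

theorem descends_iff_eq_or_parent {x y : X} :
    R.Descends x y ↔ x = y ∨ ∃ z, R.parent x = some z ∧ R.Descends z y := by
  rw [Descends, Relation.ReflTransGen.cases_head_iff]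
  rfl

theorem Descends.total {x y z : X} (hy : R.Descends x y) (hz : R.Descends x z) :
    R.Descends y z ∨ R.Descends z y :=
  Relation.ReflTransGen.total_of_right_unique
    (fun _ _ _ h h' => Option.some_injective _ (h.symm.trans h')) hy hz

theorem Descends.antisymm {x y : X} (hxy : R.Descends x y) (hyx : R.Descends y x) : x = y := by
  by_contra hne
  have hcycle : Relation.TransGen (fun a b => R.parent a = some b) x x :=
    ((Relation.reflTransGen_iff_eq_or_transGen.1 hxy).resolve_left (Ne.symm hne)).trans_left hyx
  exact R.wf.transGen.irrefl.irrefl x (Relation.transGen_swap.1 hcycle)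

theorem parent_ne_some_self (x : X) : R.parent x ≠ some x := fun h => R.wf.irrefl.irrefl x h

theorem edge_injective : Function.Injective R.edge := by
  intro x y hxy
  rcases Sym2.eq_iff.1 hxy with ⟨h, -⟩ | ⟨hx, hy⟩
  · exact Option.some_injective _ h
  · exact Descends.antisymm (.single hy) (.single hx.symm)

theorem cut_adj_parent {C : Finset X} {x : X} (hx : x ∉ C) :
    (R.cut C).Adj (some x) (R.parent x) :=
  (fromEdgeSet_adj _).2 ⟨⟨x, by simpa using hx, rfl⟩, (parent_ne_some_self x).symm⟩

section CutAncestors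

variable {C : Finset X}

theorem mem_cutAncestors {x c : X} : c ∈ R.cutAncestors C (some x) ↔ c ∈ C ∧ R.Descends x c :=
  mem_filter

theorem self_mem_cutAncestors {c : X} (hc : c ∈ C) : c ∈ R.cutAncestors C (some c) :=
  mem_cutAncestors.2 ⟨hc, .refl c⟩

theorem cutAncestors_parent {x : X} (hx : x ∉ C) :
    R.cutAncestors C (R.parent x) = R.cutAncestors C (some x) := by
  have hiff (c : X) (hc : c ∈ C) :
      R.Descends x c ↔ ∃ z, R.parent x = some z ∧ R.Descends z c := by
    rw [descends_iff_eq_or_parent, or_iff_right]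
    rintro rfl
    exact hx hc
  ext c
  rcases h : R.parent x with _ | z
  · simp +contextual [cutAncestors, hiff, h]
  · simp +contextual [mem_cutAncestors, hiff, h]

theorem cutAncestors_eq_iff {x c : X} (hc : c ∈ C) :
    R.cutAncestors C (some x) = R.cutAncestors C (some c) ↔
      R.Descends x c ∧ ∀ c' ∈ C, R.Descends x c' → R.Descends c c' := by
  constructor
  · intro h
    have hx := mem_cutAncestors.1 (h ▸ self_mem_cutAncestors hc)
    refine ⟨hx.2, fun c' hc' hx' => ?_⟩
    exact (mem_cutAncestors.1 (h ▸ mem_cutAncestors.2 ⟨hc', hx'⟩)).2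
  · rintro ⟨hxc, hx⟩
    exact filter_congr fun c' hc' => ⟨hx c' hc', hxc.trans⟩

theorem cutAncestors_some_ne_none {c : X} (hc : c ∈ C) :
    R.cutAncestors C (some c) ≠ R.cutAncestors C none :=
  Nonempty.ne_empty ⟨c, self_mem_cutAncestors hc⟩

theorem cutAncestors_injOn (C : Finset X) : Set.InjOn (R.cutAncestors C) (insertNone C) := by
  rintro (_ | c) hc (_ | c') hc' h
  · rfl
  · exact absurd h (cutAncestors_some_ne_none (some_mem_insertNone.1 hc')).symm
  · exact absurd h (cutAncestors_some_ne_none (some_mem_insertNone.1 hc))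
  · have hcc' := (cutAncestors_eq_iff (some_mem_insertNone.1 hc')).1 h
    have hc'c := (cutAncestors_eq_iff (some_mem_insertNone.1 hc)).1 h.symm
    rw [hcc'.1.antisymm hc'c.1]

theorem exists_reachable_mem_insertNone (C : Finset X) (o : Option X) :
    ∃ c ∈ insertNone C, (R.cut C).Reachable o c := by
  rcases o with _ | x
  · exact ⟨none, none_mem_insertNone, .refl none⟩
  · induction x using R.wf.induction with
    | h x ih =>
      by_cases hx : x ∈ C
      · exact ⟨some x, some_mem_insertNone.2 hx, .refl _⟩
      · have hstep := (R.cut_adj_parent hx).reachable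
        rcases h : R.parent x with _ | y
        · exact ⟨none, none_mem_insertNone, h ▸ hstep⟩
        · obtain ⟨c, hc, hyc⟩ := ih y h
          exact ⟨c, hc, (h ▸ hstep).trans hyc⟩

theorem cutAncestors_eq_of_reachable {u v : Option X} (h : (R.cut C).Reachable u v) :
    R.cutAncestors C u = R.cutAncestors C v := by
  rw [reachable_iff_reflTransGen] at h
  induction h with
  | refl => rfl
  | tail _ hadj ih =>
    obtain ⟨⟨x, hx, he⟩, -⟩ := (fromEdgeSet_adj _).1 hadj
    have hparent := R.cutAncestors_parent hx
    rcases Sym2.eq_iff.1 he with ⟨rfl, rfl⟩ | ⟨rfl, rfl⟩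
    · exact ih.trans hparent.symm
    · exact ih.trans hparent

theorem exists_cutAncestors_eq (C : Finset X) (o : Option X) :
    ∃ c ∈ insertNone C, R.cutAncestors C o = R.cutAncestors C c :=
  (R.exists_reachable_mem_insertNone C o).imp fun _ => And.imp_right cutAncestors_eq_of_reachable

theorem reachable_cut_iff {u v : Option X} :
    (R.cut C).Reachable u v ↔ R.cutAncestors C u = R.cutAncestors C v := by
  refine ⟨cutAncestors_eq_of_reachable, fun h => ?_⟩
  obtain ⟨c, hc, hu⟩ := R.exists_reachable_mem_insertNone C u
  obtain ⟨c', hc', hv⟩ := R.exists_reachable_mem_insertNone C v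
  have hcc' : c = c' := R.cutAncestors_injOn C hc hc' <|
    (cutAncestors_eq_of_reachable hu).symm.trans (h.trans (cutAncestors_eq_of_reachable hv))
  exact hu.trans (hcc' ▸ hv.symm)

end CutAncestors

variable [Fintype X]

theorem compSizes_cut_eq_map (C : Finset X) :
    compSizes (R.cut C) =
      (insertNone C).val.map fun c => #{o | R.cutAncestors C o = R.cutAncestors C c} := by
  have himage : univ.image (R.cutAncestors C) = (insertNone C).image (R.cutAncestors C) := by
    ext A
    simp only [mem_image, mem_univ, true_and]
    constructor
    · rintro ⟨o, rfl⟩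
      obtain ⟨c, hc, h⟩ := R.exists_cutAncestors_eq C o
      exact ⟨c, hc, h.symm⟩
    · rintro ⟨c, -, rfl⟩
      exact ⟨c, rfl⟩
  rw [compSizes_eq_map _ _ fun _ _ => reachable_cut_iff, himage,
    image_val_of_injOn (R.cutAncestors_injOn C), Multiset.map_map]
  rfl

theorem card_compSizes_cut (C : Finset X) : (compSizes (R.cut C)).card = #C + 1 := by
  rw [compSizes_cut_eq_map, Multiset.card_map, card_val, card_insertNone]

theorem compSizes_cut (C : Finset X) :
    compSizes (R.cut C) =
      (Fintype.card X + 1 - ∑ c ∈ C, R.branchSize C c) ::ₘ C.val.map (R.branchSize C) := by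
  have hbranch (c : X) (hc : c ∈ C) :
      #{o | R.cutAncestors C o = R.cutAncestors C (some c)} = R.branchSize C c := by
    refine Eq.trans (congrArg card (Finset.ext ?_)) (card_map Function.Embedding.some)
    rintro (_ | x)
    · simpa using (cutAncestors_some_ne_none hc).symm
    · simp [cutAncestors_eq_iff hc]
  have hsum := sum_compSizes (R.cut C)
  have hval : (insertNone C).val = none ::ₘ C.val.map some := rfl
  have hcons : compSizes (R.cut C) = #{o | R.cutAncestors C o = R.cutAncestors C none} ::ₘ
      C.val.map (R.branchSize C) := by
    rw [compSizes_cut_eq_map, hval, Multiset.map_cons, Multiset.map_map]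
    exact congrArg _ (Multiset.map_congr rfl hbranch)
  rw [hcons, Multiset.sum_cons, Fintype.card_option] at hsum
  rw [hcons, ← hsum]
  exact congrArg (· ::ₘ _) (Nat.add_sub_cancel _ _).symm

theorem cCoeff_graph (lam : Multiset ℕ) :
    cCoeff R.graph lam = #{C | compSizes (R.cut C) = lam} := by
  have hedges : R.graph.edgeSet = Set.range R.edge := by
    rw [graph, edgeSet_fromEdgeSet, sdiff_eq_left, Set.disjoint_left]
    rintro _ ⟨x, rfl⟩ hx
    exact parent_ne_some_self x hx.symm
  rw [cCoeff, hedges, ← Set.ncard_coe_finset]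
  symm
  refine Set.ncard_congr (fun C _ => R.edge '' (C : Set X)ᶜ) ?_ (fun C C' _ _ h => ?_) ?_
  · intro C hC
    exact ⟨Set.image_subset_range _ _, (mem_filter_univ C).1 (mem_coe.1 hC)⟩
  · exact coe_injective (compl_injective (edge_injective.image_injective h))
  · rintro F ⟨hF, hlam⟩
    have himage : R.edge '' ((univ.filter fun x => R.edge x ∉ F : Finset X) : Set X)ᶜ = F := by
      simp only [coe_filter_univ, Set.compl_ofPred, not_not]
      exact (Set.image_preimage_eq_inter_range).trans (Set.inter_eq_left.2 hF)
    refine ⟨_, mem_coe.2 ((mem_filter_univ _).2 ?_), himage⟩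
    rw [cut, himage, hlam]

end ParentTree

section Multisets

variable {α : Type}

theorem multisetPair_eq_iff {a b c d : α} :
    ({a, b} : Multiset α) = {c, d} ↔ a = c ∧ b = d ∨ a = d ∧ b = c := by
  constructor
  · intro h
    rcases Multiset.cons_eq_cons.1 h with ⟨rfl, hbd⟩ | ⟨-, s, hb, hd⟩
    · exact .inl ⟨rfl, Multiset.singleton_inj.1 hbd⟩
    · obtain ⟨rfl, rfl⟩ := (Multiset.singleton_eq_cons_iff _).1 hb
      exact .inr ⟨(Multiset.singleton_inj.1 hd).symm, rfl⟩
  · rintro (⟨rfl, rfl⟩ | ⟨rfl, rfl⟩)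
    · rfl
    · exact Multiset.pair_comm a b

theorem cons_eq_cons_iff_of_notMem {a b : α} {s t : Multiset α} (hb : b ∉ s) :
    a ::ₘ s = b ::ₘ t ↔ a = b ∧ s = t := by
  constructor
  · intro h
    obtain rfl : b = a := (Multiset.mem_cons.1 (h ▸ Multiset.mem_cons_self b t)).resolve_right hb
    exact ⟨rfl, (Multiset.cons_inj_right b).1 h⟩
  · rintro ⟨rfl, rfl⟩
    rfl

theorem eq_replicate_one_of_sum_eq_card {s : Multiset ℕ} (hpos : ∀ i ∈ s, 0 < i)
    (hsum : s.sum = s.card) : s = Multiset.replicate s.card 1 := by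
  refine Multiset.eq_replicate_card.2 fun i hi => ?_
  obtain ⟨t, rfl⟩ := Multiset.exists_cons_of_mem hi
  have hi_pos := hpos i hi
  have ht : t.card • 1 ≤ t.sum :=
    Multiset.card_nsmul_le_sum fun j hj => hpos j (Multiset.mem_cons_of_mem hj)
  simp only [Multiset.sum_cons, Multiset.card_cons, smul_eq_mul, mul_one] at hsum ht
  omega

theorem eq_cons_replicate_one_iff {s : Multiset ℕ} {n : ℕ} (hpos : ∀ i ∈ s, 0 < i)
    (hsum : s.sum = 3 + n) : s = 3 ::ₘ Multiset.replicate n 1 ↔ s.card = n + 1 ∧ 3 ∈ s := by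
  constructor
  · rintro rfl
    simp
  · rintro ⟨hcard, hmem⟩
    obtain ⟨t, rfl⟩ := Multiset.exists_cons_of_mem hmem
    rw [Multiset.sum_cons, Nat.add_left_cancel_iff] at hsum
    rw [Multiset.card_cons, Nat.add_right_cancel_iff] at hcard
    rw [← hcard, ← eq_replicate_one_of_sum_eq_card
      (fun i hi => hpos i (Multiset.mem_cons_of_mem hi)) (hsum.trans hcard.symm)]

end Multisets

theorem card_filter_pair_eq {X : Type} [Fintype X] {Q : X → X → Prop}
    (hQ : ∀ x y, Q x y → ¬Q y x) :
    #{C : Finset X | ∃ x y, Q x y ∧ C = {x, y}} = #{q : X × X | Q q.1 q.2} := by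
  symm
  refine card_bij (fun q _ => {q.1, q.2}) ?_ ?_ ?_
  · intro q hq
    exact (mem_filter_univ _).2 ⟨q.1, q.2, (mem_filter_univ q).1 hq, rfl⟩
  · rintro ⟨x, y⟩ hxy ⟨x', y'⟩ hxy' h
    rw [mem_filter_univ] at hxy hxy'
    have hpair : s(x, y) = s(x', y') := by
      rw [Sym2.eq_iff]
      exact Set.pair_eq_pair_iff.1 (by simpa using congrArg ((↑) : Finset X → Set X) h)
    rcases Sym2.eq_iff.1 hpair with ⟨rfl, rfl⟩ | ⟨rfl, rfl⟩
    · rfl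
    · exact absurd hxy' (hQ _ _ hxy)
  · intro C hC
    obtain ⟨x, y, hxy, rfl⟩ := (mem_filter_univ _).1 hC
    exact ⟨(x, y), (mem_filter_univ _).2 hxy, rfl⟩

namespace ParentTree

variable {X : Type} [Fintype X] {R : ParentTree X}

theorem subtreeSize_le_card (x : X) : R.subtreeSize x ≤ Fintype.card X := card_le_univ _

theorem Descends.subtreeSize_lt {x y : X} (h : R.Descends x y) (hne : x ≠ y) :
    R.subtreeSize x < R.subtreeSize y := by
  refine card_lt_card ((ssubset_iff_of_subset ?_).2 ⟨y, ?_, ?_⟩)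
  · exact monotone_filter_right _ fun z _ (hz : R.Descends z x) => hz.trans h
  · exact (mem_filter_univ y).2 (.refl y)
  · exact fun hy => hne (h.antisymm ((mem_filter_univ y).1 hy))

theorem branchSize_eq_subtreeSize {C : Finset X} {c : X}
    (hc : ∀ c' ∈ C, R.Descends c' c → c' = c) : R.branchSize C c = R.subtreeSize c := by
  refine congrArg card (filter_congr fun x _ => and_iff_left_of_imp fun hx c' hc' hx' => ?_)
  rcases hx.total hx' with h | h
  · exact h
  · exact hc c' hc' h ▸ .refl _

theorem branchSize_pair_of_descends {x y : X} (h : R.Descends x y) (hne : x ≠ y) :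
    R.branchSize {x, y} y = R.subtreeSize y - R.subtreeSize x := by
  have hsub : univ.filter (R.Descends · x) ⊆ univ.filter (R.Descends · y) :=
    monotone_filter_right _ fun z _ (hz : R.Descends z x) => hz.trans h
  rw [subtreeSize, subtreeSize, ← card_sdiff_of_subset hsub, branchSize, ← filter_and_not]
  refine congrArg card (filter_congr fun z _ => and_congr_right fun _ => ?_)
  have hyx : ¬R.Descends y x := fun hyx => hne (h.antisymm hyx)
  simp [hyx, Descends.refl]

theorem compSizes_cut_singleton (x : X) :
    compSizes (R.cut {x}) = {Fintype.card X + 1 - R.subtreeSize x, R.subtreeSize x} := by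
  have hbranch : R.branchSize {x} x = R.subtreeSize x := branchSize_eq_subtreeSize (by simp)
  rw [compSizes_cut, sum_singleton, hbranch, singleton_val, Multiset.map_singleton, hbranch]
  rfl

theorem compSizes_cut_pair {x y : X} (hne : x ≠ y) :
    compSizes (R.cut {x, y}) =
      (Fintype.card X + 1 - (R.branchSize {x, y} x + R.branchSize {x, y} y)) ::ₘ
        {R.branchSize {x, y} x, R.branchSize {x, y} y} := by
  rw [compSizes_cut, sum_pair hne, insert_val_of_notMem (by simpa using hne), singleton_val,
    Multiset.map_cons, Multiset.map_singleton]
  rfl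

theorem compSizes_cut_pair_of_descends {x y : X} (h : R.Descends x y) (hne : x ≠ y) :
    compSizes (R.cut {x, y}) = (Fintype.card X + 1 - R.subtreeSize y) ::ₘ
      {R.subtreeSize x, R.subtreeSize y - R.subtreeSize x} := by
  have hx : R.branchSize {x, y} x = R.subtreeSize x := by
    refine branchSize_eq_subtreeSize fun c' hc' hc'x => ?_
    rcases mem_insert.1 hc' with rfl | hc'
    · rfl
    · exact hc'x.antisymm (mem_singleton.1 hc' ▸ h)
  rw [compSizes_cut_pair hne, hx, branchSize_pair_of_descends h hne,
    Nat.add_sub_cancel' (h.subtreeSize_lt hne).le]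

theorem branchSize_pair_left_of_not_descends {x y : X} (hyx : ¬R.Descends y x) :
    R.branchSize {x, y} x = R.subtreeSize x := by
  refine branchSize_eq_subtreeSize fun c' hc' hc'x => ?_
  rcases mem_insert.1 hc' with rfl | hc'
  · rfl
  · exact absurd (mem_singleton.1 hc' ▸ hc'x) hyx

theorem branchSize_pair_right_of_not_descends {x y : X} (hxy : ¬R.Descends x y) :
    R.branchSize {x, y} y = R.subtreeSize y := by
  rw [pair_comm, branchSize_pair_left_of_not_descends hxy]

theorem compSizes_cut_pair_of_not_descends {x y : X} (hxy : ¬R.Descends x y)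
    (hyx : ¬R.Descends y x) :
    compSizes (R.cut {x, y}) =
      (Fintype.card X + 1 - (R.subtreeSize x + R.subtreeSize y)) ::ₘ
        {R.subtreeSize x, R.subtreeSize y} := by
  have hne : x ≠ y := fun h => hxy (h ▸ .refl x)
  rw [compSizes_cut_pair hne, branchSize_pair_left_of_not_descends hyx,
    branchSize_pair_right_of_not_descends hxy]

theorem cCoeff_graph_pair {k : ℕ} (hk : k ≤ Fintype.card X) :
    cCoeff R.graph {Fintype.card X + 1 - k, k} =
      #{x | R.subtreeSize x = k ∨ R.subtreeSize x = Fintype.card X + 1 - k} := by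
  have hsingle (x : X) : compSizes (R.cut {x}) = {Fintype.card X + 1 - k, k} ↔
      R.subtreeSize x = k ∨ R.subtreeSize x = Fintype.card X + 1 - k := by
    have hle := R.subtreeSize_le_card x
    rw [compSizes_cut_singleton, multisetPair_eq_iff]
    omega
  rw [cCoeff_graph]
  refine Eq.trans (congrArg card (Finset.ext fun C => ?_))
    (card_map ⟨singleton, singleton_injective⟩)
  simp only [mem_filter_univ, mem_map, Function.Embedding.coeFn_mk]
  constructor
  · intro hC
    have hcard := congrArg Multiset.card hC
    rw [card_compSizes_cut, Multiset.card_pair, Nat.add_right_cancel_iff, card_eq_one] at hcard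
    obtain ⟨x, rfl⟩ := hcard
    exact ⟨x, (hsingle x).1 hC, rfl⟩
  · rintro ⟨x, hx, rfl⟩
    exact (hsingle x).2 hx

variable (R) in
/-- The pairs of edges whose removal splits off components with `a` and `b` vertices from the one
containing the root, ordered so that the first edge of a nested pair is the lower one. -/
def CutsOff (a b : ℕ) (x y : X) : Prop :=
  R.subtreeSize x = a ∧ R.subtreeSize y = b ∧ ¬R.Descends x y ∨
    R.Descends x y ∧ R.subtreeSize y = a + b ∧ (R.subtreeSize x = a ∨ R.subtreeSize x = b)

section Triple

variable {a b : ℕ}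

theorem CutsOff.asymm (ha : 0 < a) (hab : a < b) (x y : X) (h : R.CutsOff a b x y) :
    ¬R.CutsOff a b y x := by
  unfold CutsOff at *
  omega

theorem compSizes_cut_pair_eq_of_cutsOff (ha : 0 < a) (hab : a < b) {x y : X}
    (h : R.CutsOff a b x y) :
    compSizes (R.cut {x, y}) = (Fintype.card X + 1 - (a + b)) ::ₘ {a, b} := by
  rcases h with ⟨hx, hy, hxy⟩ | ⟨hxy, hy, hx⟩
  · have hyx (hyx : R.Descends y x) : False := by
      have hlt := hyx.subtreeSize_lt fun h => hxy (h ▸ .refl y)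
      omega
    rw [compSizes_cut_pair_of_not_descends hxy hyx, hx, hy]
  · have hne : x ≠ y := by
      rintro rfl
      omega
    rw [compSizes_cut_pair_of_descends hxy hne, hy]
    rcases hx with hx | hx
    · rw [hx, Nat.add_sub_cancel_left]
    · rw [hx, Nat.add_sub_cancel, Multiset.pair_comm]

theorem cutsOff_of_descends {x y : X} (hxy : R.Descends x y) (hne : x ≠ y)
    (hroot : ∀ z, R.subtreeSize z < Fintype.card X + 1 - (a + b))
    (h : compSizes (R.cut {x, y}) = (Fintype.card X + 1 - (a + b)) ::ₘ {a, b}) :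
    R.CutsOff a b x y := by
  have hx := hroot x
  have hy := hroot y
  have hlt := hxy.subtreeSize_lt hne
  rw [compSizes_cut_pair_of_descends hxy hne,
    cons_eq_cons_iff_of_notMem (by simp; omega), multisetPair_eq_iff] at h
  exact .inr ⟨hxy, by omega, by omega⟩

theorem cutsOff_or_cutsOff_of_compSizes_eq {x y : X} (hne : x ≠ y)
    (hroot : ∀ z, R.subtreeSize z < Fintype.card X + 1 - (a + b))
    (h : compSizes (R.cut {x, y}) = (Fintype.card X + 1 - (a + b)) ::ₘ {a, b}) :
    R.CutsOff a b x y ∨ R.CutsOff a b y x := by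
  by_cases hxy : R.Descends x y
  · exact .inl (cutsOff_of_descends hxy hne hroot h)
  by_cases hyx : R.Descends y x
  · exact .inr (cutsOff_of_descends hyx hne.symm hroot (pair_comm x y ▸ h))
  have hx := hroot x
  have hy := hroot y
  rw [compSizes_cut_pair_of_not_descends hxy hyx,
    cons_eq_cons_iff_of_notMem (by simp; omega), multisetPair_eq_iff] at h
  rcases h.2 with ⟨hx, hy⟩ | ⟨hx, hy⟩
  · exact .inl (.inl ⟨hx, hy, hxy⟩)
  · exact .inr (.inl ⟨hy, hx, hyx⟩)

theorem cCoeff_graph_triple (ha : 0 < a) (hab : a < b)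
    (hroot : ∀ z, R.subtreeSize z < Fintype.card X + 1 - (a + b)) :
    cCoeff R.graph ((Fintype.card X + 1 - (a + b)) ::ₘ {a, b}) =
      #{q : X × X | R.CutsOff a b q.1 q.2} := by
  rw [cCoeff_graph, ← card_filter_pair_eq (CutsOff.asymm ha hab)]
  refine congrArg card (filter_congr fun C _ => ⟨fun hC => ?_, ?_⟩)
  · have hcard := congrArg Multiset.card hC
    rw [card_compSizes_cut, Multiset.card_cons, Multiset.card_pair, Nat.add_right_cancel_iff,
      card_eq_two] at hcard
    obtain ⟨x, y, hne, rfl⟩ := hcard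
    rcases cutsOff_or_cutsOff_of_compSizes_eq hne hroot hC with h | h
    · exact ⟨x, y, h, rfl⟩
    · exact ⟨y, x, h, pair_comm x y⟩
  · rintro ⟨x, y, h, rfl⟩
    exact compSizes_cut_pair_eq_of_cutsOff ha hab h

end Triple

end ParentTree

namespace ParentTree

variable {X : Type} [Fintype X] {R : ParentTree X}

theorem card_cutAncestors_fiber {C : Finset X} {o : Option X} (ho : o ∈ insertNone C) :
    #{v | R.cutAncestors C v = R.cutAncestors C o} =
      #{x ∈ Cᶜ | R.cutAncestors C (some x) = R.cutAncestors C o} + 1 := by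
  have hfiber : ({v | R.cutAncestors C v = R.cutAncestors C o} : Finset (Option X)) =
      insert o (({x ∈ Cᶜ | R.cutAncestors C (some x) = R.cutAncestors C o}).map .some) := by
    ext v
    by_cases hv : v ∈ insertNone C
    · have heq : R.cutAncestors C v = R.cutAncestors C o ↔ v = o :=
        (R.cutAncestors_injOn C).eq_iff hv ho
      rcases v with _ | x
      · simpa using heq
      · simpa [some_mem_insertNone.1 hv] using heq
    · obtain ⟨x, rfl⟩ : ∃ x, v = some x :=
        Option.ne_none_iff_exists'.1 fun h => hv (h ▸ none_mem_insertNone)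
      have hxo : some x ≠ o := fun h => hv (h ▸ ho)
      rw [some_mem_insertNone] at hv
      simp [hxo, hv]
  rw [hfiber, card_insert_of_notMem, card_map]
  rintro h
  obtain ⟨x, hx, rfl⟩ := mem_map.1 h
  exact mem_compl.1 (mem_filter.1 hx).1 (some_mem_insertNone.1 ho)

theorem three_mem_compSizes_cut_compl_iff {x y : X} (hne : x ≠ y) :
    3 ∈ compSizes (R.cut {x, y}ᶜ) ↔
      R.cutAncestors {x, y}ᶜ (some x) = R.cutAncestors {x, y}ᶜ (some y) := by
  have hfiber (o : Option X) (ho : o ∈ insertNone ({x, y}ᶜ : Finset X)) :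
      #{v | R.cutAncestors {x, y}ᶜ v = R.cutAncestors {x, y}ᶜ o} = 3 ↔
        R.cutAncestors {x, y}ᶜ (some x) = R.cutAncestors {x, y}ᶜ o ∧
          R.cutAncestors {x, y}ᶜ (some y) = R.cutAncestors {x, y}ᶜ o := by
    rw [card_cutAncestors_fiber ho, compl_compl, Nat.add_right_cancel_iff, ← card_pair hne,
      card_filter_eq_iff]
    simp
  rw [compSizes_cut_eq_map, Multiset.mem_map]
  constructor
  · rintro ⟨o, ho, h⟩
    have hxy := (hfiber o ho).1 h
    exact hxy.1.trans hxy.2.symm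
  · intro h
    obtain ⟨o, ho, hx⟩ := R.exists_cutAncestors_eq {x, y}ᶜ (some x)
    exact ⟨o, ho, (hfiber o ho).2 ⟨hx, h.symm.trans hx⟩⟩

theorem cutAncestors_compl_pair_eq_iff {x y : X} :
    R.cutAncestors {x, y}ᶜ (some x) = R.cutAncestors {x, y}ᶜ (some y) ↔
      R.parent x = some y ∨ R.parent y = some x ∨ R.parent x = R.parent y := by
  have hx : R.cutAncestors {x, y}ᶜ (R.parent x) = R.cutAncestors {x, y}ᶜ (some x) :=
    cutAncestors_parent (by simp)
  have hy : R.cutAncestors {x, y}ᶜ (R.parent y) = R.cutAncestors {x, y}ᶜ (some y) :=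
    cutAncestors_parent (by simp)
  have hkept {z w : X} (hz : R.parent z ≠ some w) (hzw : ({z, w} : Finset X) = {x, y}) :
      R.parent z ∈ (insertNone ({x, y}ᶜ : Finset X) : Set (Option X)) := by
    rw [← hzw]
    rcases h : R.parent z with _ | c
    · simp
    · have hcz : c ≠ z := fun hcz => R.parent_ne_some_self z (hcz ▸ h)
      have hcw : c ≠ w := fun hcw => hz (hcw ▸ h)
      exact some_mem_insertNone.2 (by simp [hcz, hcw])
  constructor
  · intro h
    by_contra! hne
    rw [← hx, ← hy] at h
    exact hne.2.2 (R.cutAncestors_injOn _ (hkept hne.1 rfl) (hkept hne.2.1 (pair_comm y x)) h)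
  · rintro (h | h | h)
    · rw [← hx, h]
    · rw [← hy, h]
    · rw [← hx, ← hy, h]

theorem compSizes_cut_compl_eq_iff (hX : 2 ≤ Fintype.card X) (D : Finset X) :
    compSizes (R.cut Dᶜ) = 3 ::ₘ Multiset.replicate (Fintype.card X - 2) 1 ↔
      (∃ x y, R.parent x = some y ∧ D = {x, y}) ∨ ∃ o, D ∈ powersetCard 2 (R.children o) := by
  have hsum : (compSizes (R.cut Dᶜ)).sum = 3 + (Fintype.card X - 2) := by
    rw [sum_compSizes, Fintype.card_option]
    omega
  have hcard : #Dᶜ + 1 = Fintype.card X - 2 + 1 ↔ #D = 2 := by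
    have hD := card_le_univ D
    rw [card_compl]
    omega
  rw [eq_cons_replicate_one_iff (fun _ => pos_of_mem_compSizes) hsum, card_compSizes_cut, hcard,
    card_eq_two]
  constructor
  · rintro ⟨⟨x, y, hne, rfl⟩, h⟩
    rw [three_mem_compSizes_cut_compl_iff hne, cutAncestors_compl_pair_eq_iff] at h
    rcases h with h | h | h
    · exact .inl ⟨x, y, h, rfl⟩
    · exact .inl ⟨y, x, h, pair_comm x y⟩
    · refine .inr ⟨R.parent x, mem_powersetCard.2 ⟨?_, card_pair hne⟩⟩
      simp [insert_subset_iff, children, h]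
  · rintro (⟨x, y, h, rfl⟩ | ⟨o, hD⟩)
    · have hne : x ≠ y := fun hxy => R.parent_ne_some_self x (hxy ▸ h)
      refine ⟨⟨x, y, hne, rfl⟩, ?_⟩
      exact (three_mem_compSizes_cut_compl_iff hne).2 (cutAncestors_compl_pair_eq_iff.2 (.inl h))
    · obtain ⟨hsub, hD⟩ := mem_powersetCard.1 hD
      obtain ⟨x, y, hne, rfl⟩ := card_eq_two.1 hD
      refine ⟨⟨x, y, hne, rfl⟩, ?_⟩
      rw [three_mem_compSizes_cut_compl_iff hne, cutAncestors_compl_pair_eq_iff]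
      simp only [insert_subset_iff, singleton_subset_iff, children, mem_filter_univ] at hsub
      exact .inr (.inr (hsub.1.trans hsub.2.symm))

theorem card_filter_parent_pair :
    #{D : Finset X | ∃ x y, R.parent x = some y ∧ D = {x, y}} = #{x | (R.parent x).isSome} := by
  have hasymm (x y : X) (hxy : R.parent x = some y) : R.parent y ≠ some x := fun hyx => by
    obtain rfl := Descends.antisymm (.single hxy) (.single hyx)
    exact R.parent_ne_some_self x hxy
  trans #{q : X × X | R.parent q.1 = some q.2}
  · convert card_filter_pair_eq hasymm
  refine card_nbij Prod.fst ?_ ?_ ?_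
  · intro q hq
    simp_all
  · rintro ⟨x, y⟩ hy ⟨x', y'⟩ hy' rfl
    simp_all
  · intro x hx
    obtain ⟨y, hy⟩ := Option.isSome_iff_exists.1 ((mem_filter_univ x).1 hx)
    exact ⟨(x, y), by simpa using hy, rfl⟩

theorem card_biUnion_powersetCard_children :
    #(univ.biUnion fun o => powersetCard 2 (R.children o)) =
      ∑ o, (#(R.children o)).choose 2 := by
  rw [card_biUnion]
  · simp only [card_powersetCard]
  · intro o _ o' _ hne
    refine disjoint_left.2 fun D hD hD' => hne ?_
    obtain ⟨hsub, hD⟩ := mem_powersetCard.1 hD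
    obtain ⟨x, hx⟩ : D.Nonempty := card_pos.1 (by omega)
    have hx' := (mem_powersetCard.1 hD').1 hx
    exact ((mem_filter_univ x).1 (hsub hx)).symm.trans ((mem_filter_univ x).1 hx')

theorem cCoeff_graph_three_ones (hX : 2 ≤ Fintype.card X) :
    cCoeff R.graph (3 ::ₘ Multiset.replicate (Fintype.card X - 2) 1) =
      #{x | (R.parent x).isSome} + ∑ o, (#(R.children o)).choose 2 := by
  have hdisj : Disjoint ({D | ∃ x y, R.parent x = some y ∧ D = {x, y}} : Finset (Finset X))
      (univ.biUnion fun o => powersetCard 2 (R.children o)) := by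
    refine disjoint_left.2 fun D hD hD' => ?_
    obtain ⟨x, y, hxy, rfl⟩ := (mem_filter_univ D).1 hD
    obtain ⟨o, -, ho⟩ := mem_biUnion.1 hD'
    have hsub := (mem_powersetCard.1 ho).1
    simp only [insert_subset_iff, singleton_subset_iff, children, mem_filter_univ] at hsub
    exact R.parent_ne_some_self y (hsub.2.trans (hsub.1.symm.trans hxy))
  rw [cCoeff_graph, ← card_filter_parent_pair, ← card_biUnion_powersetCard_children,
    ← card_union_of_disjoint hdisj]
  refine card_nbij' compl compl ?_ ?_ (fun C _ => compl_compl C) fun C _ => compl_compl C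
  · intro C hC
    rw [mem_coe, mem_filter_univ, ← compl_compl C, compSizes_cut_compl_eq_iff hX] at hC
    simpa using hC
  · intro D hD
    rw [mem_coe, mem_filter_univ, compSizes_cut_compl_eq_iff hX]
    simpa using hD

end ParentTree

namespace ParentTree

variable {X Y : Type} [Fintype X] [Fintype Y] {R : ParentTree X} {R' : ParentTree Y}

/-- The number of edges above a subtree with `k` vertices. -/
noncomputable def sizeCount (R : ParentTree X) (k : ℕ) : ℕ := #{x | R.subtreeSize x = k}

/-- The number of pairs of a subtree with `a` vertices inside one with `b` vertices. -/
noncomputable def nestedCount (R : ParentTree X) (a b : ℕ) : ℕ :=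
  #{q : X × X | R.Descends q.1 q.2 ∧ R.subtreeSize q.1 = a ∧ R.subtreeSize q.2 = b}

theorem sizeCount_add_sizeCount_eq (h : cCoeff R.graph = cCoeff R'.graph) {k l : ℕ}
    (hk : k ≤ Fintype.card X) (hkl : k + l = Fintype.card X + 1) :
    R.sizeCount k + R.sizeCount l = R'.sizeCount k + R'.sizeCount l := by
  have hcard : Fintype.card X = Fintype.card Y := by simpa using card_eq_of_cCoeff_eq h
  obtain rfl : l = Fintype.card X + 1 - k := by omega
  have hcount := congrFun h {Fintype.card X + 1 - k, k}
  rw [cCoeff_graph_pair hk, hcard, cCoeff_graph_pair (hcard ▸ hk)] at hcount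
  rw [hcard]
  unfold sizeCount
  by_cases hhalf : k = Fintype.card Y + 1 - k
  · simp only [← hhalf, or_self] at hcount ⊢
    rw [hcount]
  · have hdisj {Z : Type} (w : Z → ℕ) (s : Finset Z) :
        Disjoint {z ∈ s | w z = k} {z ∈ s | w z = Fintype.card Y + 1 - k} :=
      disjoint_filter.2 fun z _ hz hz' => hhalf (hz.symm.trans hz')
    rwa [filter_or, filter_or, card_union_of_disjoint (hdisj _ _),
      card_union_of_disjoint (hdisj _ _)] at hcount

theorem cCoeff_graph_triple_add_nestedCount {a b : ℕ} (ha : 0 < a) (hab : a < b)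
    (hroot : ∀ z, R.subtreeSize z < Fintype.card X + 1 - (a + b)) :
    cCoeff R.graph ((Fintype.card X + 1 - (a + b)) ::ₘ {a, b}) + R.nestedCount a b =
      R.sizeCount a * R.sizeCount b + R.nestedCount a (a + b) + R.nestedCount b (a + b) := by
  rw [cCoeff_graph_triple ha hab hroot]
  have hprod : R.sizeCount a * R.sizeCount b =
      #{q : X × X | R.subtreeSize q.1 = a ∧ R.subtreeSize q.2 = b} := by
    rw [sizeCount, sizeCount, ← card_product, ← filter_product, univ_product_univ]
  rw [hprod]
  simp only [nestedCount, card_filter, ← sum_add_distrib]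
  refine sum_congr rfl fun q _ => ?_
  by_cases hq : R.Descends q.1 q.2
  · simp only [CutsOff, hq, not_true_eq_false, and_false, false_or, true_and]
    split_ifs <;> omega
  · simp [CutsOff, hq]

theorem card_isSome_parent_add_card_children_none :
    #{x | (R.parent x).isSome} + #(R.children none) = Fintype.card X := by
  simpa [children] using card_filter_add_card_filter_not (s := univ) fun x => (R.parent x).isSome

/-- The isomorphism induced by a relabelling of the non-root vertices that respects parents. -/
def isoOfParentEq (E : X ≃ Y) (h : ∀ x, R'.parent (E x) = (R.parent x).map E) :
    R.graph ≃g R'.graph where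
  toEquiv := E.optionCongr
  map_rel_iff' {u v} := by
    have hedge (x : X) : R'.edge (E x) = Sym2.map E.optionCongr (R.edge x) := by
      simp [edge, h]
    have hrange : Set.range R'.edge = Sym2.map E.optionCongr '' Set.range R.edge := by
      rw [← Set.range_comp, ← E.surjective.range_comp]
      exact congrArg Set.range (funext hedge)
    simp only [graph, fromEdgeSet_adj, hrange, ne_eq, E.optionCongr.injective.eq_iff]
    exact and_congr_left' ((Sym2.map.injective E.optionCongr.injective).mem_set_image
      (a := s(u, v)))

end ParentTree

section Legs

/-- The position of the parent of position `j ≠ 0` in a leg of order `n`, where position `0` is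
adjacent to the torso and, in a 2-leg, positions `n - 2` and `n - 1` are the two twin leaves. -/
noncomputable def parentPos (n : ℕ) (two : Prop) (j : ℕ) : ℕ :=
  if two ∧ j + 1 = n then n - 3 else j - 1

/-- The number of vertices below position `j` in a leg of order `n`, itself included. -/
noncomputable def legSize (n : ℕ) (two : Prop) (j : ℕ) : ℕ :=
  if two ∧ n ≤ j + 2 then 1 else n - j

variable {n j k : ℕ} {two : Prop}

theorem parentPos_lt (h : two → 3 ≤ n) (hj : j ≠ 0) : parentPos n two j < j := by
  unfold parentPos
  split_ifs with hleaf
  · have hn := h hleaf.1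
    omega
  · omega

theorem card_legSize_eq_one (h : two → 3 ≤ n) (hn : 0 < n) :
    #{j ∈ range n | legSize n two j = 1} = 1 + if two then 1 else 0 := by
  unfold legSize
  by_cases htwo : two
  · have hn := h htwo
    have hset : {j ∈ range n | (if two ∧ n ≤ j + 2 then 1 else n - j) = 1} = {n - 2, n - 1} := by
      ext j
      simp only [htwo, true_and, mem_filter, mem_range, mem_insert, mem_singleton]
      split_ifs <;> omega
    rw [hset, card_pair (by omega), if_pos htwo]
  · have hset : {j ∈ range n | (if two ∧ n ≤ j + 2 then 1 else n - j) = 1} = {n - 1} := by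
      ext j
      simp only [htwo, false_and, if_false, mem_filter, mem_range, mem_singleton]
      omega
    rw [hset, card_singleton, if_neg htwo]

theorem card_legSize_eq_two (h : two → 3 ≤ n) :
    #{j ∈ range n | legSize n two j = 2} + (if two then 1 else 0) = if 2 ≤ n then 1 else 0 := by
  unfold legSize
  by_cases htwo : two
  · have hn := h htwo
    have hset : {j ∈ range n | (if two ∧ n ≤ j + 2 then 1 else n - j) = 2} = ∅ := by
      ext j
      simp only [htwo, true_and, mem_filter, mem_range, notMem_empty, iff_false]
      split_ifs <;> omega
    rw [hset, card_empty, if_pos htwo, if_pos (by omega)]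
  · have hset : {j ∈ range n | (if two ∧ n ≤ j + 2 then 1 else n - j) = 2} =
        if 2 ≤ n then {n - 2} else ∅ := by
      ext j
      simp only [htwo, false_and, if_false, mem_filter, mem_range]
      split_ifs <;> simp <;> omega
    rw [hset, if_neg htwo, apply_ite card, card_singleton, card_empty, add_zero]

theorem card_legSize_eq (hk : 3 ≤ k) :
    #{j ∈ range n | legSize n two j = k} = if k ≤ n then 1 else 0 := by
  have hset : {j ∈ range n | legSize n two j = k} = if k ≤ n then {n - k} else ∅ := by
    ext j
    rw [mem_filter, mem_range, legSize]
    by_cases hkn : k ≤ n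
    · simp only [if_pos hkn, mem_singleton]
      split_ifs <;> omega
    · simp only [if_neg hkn, notMem_empty, iff_false]
      split_ifs <;> omega
  rw [hset, apply_ite card, card_singleton, card_empty]

theorem choose_two_card_parentPos_eq (h : two → 3 ≤ n) :
    (#{j' ∈ range n | j' ≠ 0 ∧ parentPos n two j' = j}).choose 2 =
      if two ∧ j + 3 = n then 1 else 0 := by
  unfold parentPos
  split_ifs with hj
  · have hset : {j' ∈ range n | j' ≠ 0 ∧ (if two ∧ j' + 1 = n then n - 3 else j' - 1) = j} =
        {n - 2, n - 1} := by
      ext j'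
      simp only [hj.1, true_and, mem_filter, mem_range, mem_insert, mem_singleton]
      split_ifs <;> omega
    rw [hset, card_pair (by omega), Nat.choose_self]
  · refine Nat.choose_eq_zero_of_lt (Nat.lt_succ_of_le ?_)
    refine (card_le_card (t := {j + 1}) fun j' hj' => ?_).trans (card_singleton _).le
    obtain ⟨-, hne, hparent⟩ := mem_filter.1 hj'
    rw [mem_singleton]
    split_ifs at hparent with hleaf
    · have hn := h hleaf.1
      exact absurd ⟨hleaf.1, by omega⟩ hj
    · omega

end Legs

/-- The legs of a 2-spider, indexed by `ι`: their orders, and which of them are 2-legs. -/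
structure SpiderLegs (ι : Type) [Fintype ι] where
  order : ι → ℕ
  isTwoLeg : ι → Prop
  order_pos (i : ι) : 0 < order i
  three_le_order {i : ι} : isTwoLeg i → 3 ≤ order i
  three_le_card : 3 ≤ Fintype.card ι

namespace SpiderLegs

variable {ι : Type} [Fintype ι] (S : SpiderLegs ι)

/-- The vertices of the 2-spider other than the torso: the positions in its legs. -/
abbrev Vertex : Type := Σ i, Fin (S.order i)

/-- The 2-spider with the given legs, rooted at its torso. -/
noncomputable def tree : ParentTree S.Vertex where
  parent x := if hx : x.2.val = 0 then none else
    some ⟨x.1, parentPos (S.order x.1) (S.isTwoLeg x.1) x.2,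
      (parentPos_lt S.three_le_order hx).trans x.2.isLt⟩
  wf := by
    refine Subrelation.wf (r := InvImage (· < ·) fun x => x.2.val) (fun {y x} h => ?_)
      (InvImage.wf _ wellFounded_lt)
    split_ifs at h with hx
    obtain rfl := Option.some_injective _ h
    exact parentPos_lt S.three_le_order hx

/-- The number of positions of leg `i` with `k` vertices below, themselves included. -/
noncomputable def legSizeCount (i : ι) (k : ℕ) : ℕ :=
  #{j ∈ range (S.order i) | legSize (S.order i) (S.isTwoLeg i) j = k}

/-- The number of legs of order at least `k`. -/
noncomputable def legCount (k : ℕ) : ℕ := #{i | k ≤ S.order i}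

/-- The number of 2-legs of order at least `k`. -/
noncomputable def twoLegCount (k : ℕ) : ℕ := #{i | S.isTwoLeg i ∧ k ≤ S.order i}

variable {S}

theorem vertex_eq_iff {x y : S.Vertex} : x = y ↔ x.1 = y.1 ∧ x.2.val = y.2.val := by
  obtain ⟨i, j⟩ := x
  obtain ⟨i', j'⟩ := y
  rw [Sigma.mk.injEq]
  refine and_congr_right ?_
  rintro rfl
  rw [heq_iff_eq, Fin.ext_iff]

theorem parent_eq_none_iff {x : S.Vertex} : S.tree.parent x = none ↔ x.2.val = 0 := by
  simp [tree]

theorem parent_eq_some_iff {x y : S.Vertex} :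
    S.tree.parent x = some y ↔ x.1 = y.1 ∧ x.2.val ≠ 0 ∧
      parentPos (S.order x.1) (S.isTwoLeg x.1) x.2 = y.2 := by
  simp only [tree]
  split_ifs with hx
  · simp [hx]
  · rw [Option.some_inj]
    constructor
    · rintro rfl
      exact ⟨rfl, hx, rfl⟩
    · rintro ⟨hleg, -, hpos⟩
      exact vertex_eq_iff.2 ⟨hleg, hpos⟩

theorem descends_iff {x y : S.Vertex} :
    S.tree.Descends x y ↔ x.1 = y.1 ∧ y.2.val ≤ x.2.val ∧
      ¬(S.isTwoLeg y.1 ∧ y.2.val + 2 = S.order y.1 ∧ x.2.val + 1 = S.order y.1) := by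
  induction x using S.tree.wf.induction with
  | h x ih =>
    rw [ParentTree.descends_iff_eq_or_parent, vertex_eq_iff]
    rcases hz : S.tree.parent x with _ | z
    · rw [parent_eq_none_iff] at hz
      simp
      omega
    · have hzx := parent_eq_some_iff.1 hz
      simp only [Option.some.injEq, exists_eq_left', ih z hz, ← hzx.1]
      by_cases hleg : x.1 = y.1
      · have hx : x.2.val < S.order y.1 := hleg ▸ x.2.isLt
        have hy := y.2.isLt
        have hparent := hzx.2.2
        simp only [hleg] at hparent
        simp only [hleg, true_and, ← hparent]
        unfold parentPos
        by_cases htwo : S.isTwoLeg y.1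
        · have hthree := S.three_le_order htwo
          simp only [htwo, true_and]
          split_ifs <;> omega
        · simp only [htwo, false_and, if_false, not_false_eq_true, and_true]
          omega
      · simp [hleg]

theorem card_filter_vertex (S : SpiderLegs ι) (p : ι → ℕ → Prop) [∀ i, DecidablePred (p i)] :
    #{x : S.Vertex | p x.1 x.2} = ∑ i, #{j ∈ range (S.order i) | p i j} := by
  simp only [card_filter, Fintype.sum_sigma]
  exact sum_congr rfl fun i _ => Fin.sum_univ_eq_sum_range (fun j => if p i j then 1 else 0) _

theorem card_vertex : Fintype.card S.Vertex = ∑ i, S.order i := by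
  simp

theorem card_legs_le_card_vertex : Fintype.card ι ≤ Fintype.card S.Vertex := by
  rw [card_vertex, ← card_univ, card_eq_sum_ones]
  exact sum_le_sum fun i _ => S.order_pos i

theorem card_filter_vertex_leg (S : SpiderLegs ι) (i : ι) (p : ℕ → Prop) [DecidablePred p] :
    #{x : S.Vertex | x.1 = i ∧ p x.2} = #{j ∈ range (S.order i) | p j} := by
  rw [card_filter_vertex S fun i' j => i' = i ∧ p j, sum_eq_single_of_mem i (mem_univ i)]
  · simp
  · intro i' _ hne
    simp [hne]

theorem subtreeSize_eq_legSize (x : S.Vertex) :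
    S.tree.subtreeSize x = legSize (S.order x.1) (S.isTwoLeg x.1) x.2 := by
  have hx := x.2.isLt
  simp only [ParentTree.subtreeSize, descends_iff]
  rw [card_filter_vertex_leg S x.1 fun j =>
    x.2.val ≤ j ∧ ¬(S.isTwoLeg x.1 ∧ x.2.val + 2 = S.order x.1 ∧ j + 1 = S.order x.1), legSize]
  split_ifs with hleaf
  · refine card_eq_one.2 ⟨x.2, ?_⟩
    ext j
    simp only [hleaf.1, true_and, mem_filter, mem_range, mem_singleton]
    omega
  · rw [← Nat.card_Ico]
    congr 1
    ext j
    simp only [mem_filter, mem_range, mem_Ico]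
    by_cases htwo : S.isTwoLeg x.1
    · simp only [htwo, true_and] at hleaf ⊢
      omega
    · simp only [htwo, false_and, not_false_eq_true, and_true]
      omega

theorem sizeCount_eq_sum (k : ℕ) : S.tree.sizeCount k = ∑ i, S.legSizeCount i k := by
  simp only [ParentTree.sizeCount, subtreeSize_eq_legSize]
  exact card_filter_vertex S fun i j => legSize (S.order i) (S.isTwoLeg i) j = k

theorem descends_iff_of_subtreeSize_le {x y : S.Vertex} (hy : 3 ≤ S.tree.subtreeSize y)
    (hxy : S.tree.subtreeSize x ≤ S.tree.subtreeSize y) :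
    S.tree.Descends x y ↔ x.1 = y.1 := by
  rw [descends_iff, and_iff_left_iff_imp]
  intro hleg
  have hx : x.2.val < S.order y.1 := hleg ▸ x.2.isLt
  rw [subtreeSize_eq_legSize, legSize] at hy
  simp only [subtreeSize_eq_legSize, legSize, hleg] at hxy
  split_ifs at hy hxy <;> omega

theorem nestedCount_eq_sum {a b : ℕ} (hab : a ≤ b) (hb : 3 ≤ b) :
    S.tree.nestedCount a b = ∑ i, S.legSizeCount i a * S.legSizeCount i b := by
  have hcount (i : ι) (k : ℕ) :
      S.legSizeCount i k = #{x : S.Vertex | x.1 = i ∧ S.tree.subtreeSize x = k} := by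
    rw [legSizeCount, ← card_filter_vertex_leg S]
    simp only [subtreeSize_eq_legSize]
    exact congrArg card (filter_congr fun x _ => and_congr_right fun h => by simp only [h])
  rw [ParentTree.nestedCount, card_eq_sum_card_fiberwise (f := fun q => q.2.1) (t := univ)
    fun _ _ => mem_coe.2 (mem_univ _)]
  refine sum_congr rfl fun i _ => ?_
  rw [hcount, hcount, ← card_product, filter_filter]
  congr 1
  ext q
  simp only [mem_filter_univ, mem_product]
  constructor
  · rintro ⟨⟨hdesc, ha, hb'⟩, hleg⟩
    exact ⟨⟨(descends_iff.1 hdesc).1.trans hleg, ha⟩, hleg, hb'⟩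
  · rintro ⟨⟨hleg, ha⟩, hleg', hb'⟩
    exact ⟨⟨(descends_iff_of_subtreeSize_le (by omega) (by omega)).2 (hleg.trans hleg'.symm),
      ha, hb'⟩, hleg'⟩

theorem legSizeCount_one (i : ι) : S.legSizeCount i 1 = 1 + if S.isTwoLeg i then 1 else 0 :=
  card_legSize_eq_one S.three_le_order (S.order_pos i)

theorem legSizeCount_eq {k : ℕ} (hk : 3 ≤ k) (i : ι) :
    S.legSizeCount i k = if k ≤ S.order i then 1 else 0 :=
  card_legSize_eq hk

theorem twoLegCount_of_le_three {k : ℕ} (hk : k ≤ 3) : S.twoLegCount k = #{i | S.isTwoLeg i} :=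
  congrArg card (filter_congr fun _ _ => and_iff_left_of_imp fun h => hk.trans (S.three_le_order h))

theorem legCount_one : S.legCount 1 = Fintype.card ι :=
  congrArg card (filter_true_of_mem fun i _ => S.order_pos i)

theorem sizeCount_one : S.tree.sizeCount 1 = S.legCount 1 + S.twoLegCount 3 := by
  rw [sizeCount_eq_sum, legCount_one, twoLegCount_of_le_three le_rfl]
  simp only [legSizeCount_one, sum_add_distrib, card_filter]
  simp

theorem sizeCount_two_add : S.tree.sizeCount 2 + S.twoLegCount 3 = S.legCount 2 := by
  rw [sizeCount_eq_sum, twoLegCount_of_le_three le_rfl, legCount, card_filter, card_filter,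
    ← sum_add_distrib]
  exact sum_congr rfl fun i _ => card_legSize_eq_two S.three_le_order

theorem sizeCount_eq_legCount {k : ℕ} (hk : 3 ≤ k) : S.tree.sizeCount k = S.legCount k := by
  rw [sizeCount_eq_sum, legCount, card_filter]
  exact sum_congr rfl fun i _ => legSizeCount_eq hk i

theorem nestedCount_one {k : ℕ} (hk : 3 ≤ k) :
    S.tree.nestedCount 1 k = S.legCount k + S.twoLegCount k := by
  rw [nestedCount_eq_sum (by omega) hk, legCount, twoLegCount, card_filter, card_filter,
    ← sum_add_distrib]
  refine sum_congr rfl fun i _ => ?_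
  rw [legSizeCount_one, legSizeCount_eq hk]
  split_ifs <;> simp_all

theorem nestedCount_succ {k : ℕ} (hk : 3 ≤ k) :
    S.tree.nestedCount k (k + 1) = S.legCount (k + 1) := by
  rw [nestedCount_eq_sum (by omega) (by omega), legCount, card_filter]
  refine sum_congr rfl fun i _ => ?_
  rw [legSizeCount_eq hk, legSizeCount_eq (by omega)]
  split_ifs <;> omega

theorem legCount_antitone : Antitone S.legCount := fun _ _ hkl =>
  card_le_card (monotone_filter_right _ fun _ _ h => hkl.trans h)

theorem subtreeSize_le_order (x : S.Vertex) : S.tree.subtreeSize x ≤ S.order x.1 := by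
  have hx := x.2.isLt
  rw [subtreeSize_eq_legSize, legSize]
  split_ifs <;> omega

theorem legCount_eq_zero_iff {k : ℕ} : S.legCount k = 0 ↔ ∀ i, S.order i < k := by
  rw [legCount, card_eq_zero, filter_eq_empty_iff]
  simp

theorem cCoeff_triple_add {k : ℕ} (hk : 3 ≤ k) (hkN : k + 1 ≤ Fintype.card S.Vertex)
    (hlong : S.legCount (Fintype.card S.Vertex - k) = 0) :
    cCoeff S.tree.graph ((Fintype.card S.Vertex - k) ::ₘ {1, k}) +
        (S.legCount k + S.twoLegCount k) =
      (S.legCount 1 + S.twoLegCount 3) * S.legCount k +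
        (2 * S.legCount (k + 1) + S.twoLegCount (k + 1)) := by
  have hroot (z : S.Vertex) : S.tree.subtreeSize z < Fintype.card S.Vertex + 1 - (1 + k) := by
    have horder := legCount_eq_zero_iff.1 hlong z.1
    have hz := subtreeSize_le_order z
    omega
  have htriple := S.tree.cCoeff_graph_triple_add_nestedCount one_pos (by omega) hroot
  have hpart : Fintype.card S.Vertex + 1 - (1 + k) = Fintype.card S.Vertex - k := by omega
  rw [hpart, add_comm 1 k, nestedCount_one hk, sizeCount_one, sizeCount_eq_legCount hk,
    nestedCount_one (by omega), nestedCount_succ hk] at htriple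
  omega

theorem card_children_none : #(S.tree.children none) = Fintype.card ι := by
  simp only [ParentTree.children, parent_eq_none_iff]
  rw [card_filter_vertex S fun _ j => j = 0]
  simp [filter_eq', S.order_pos]

theorem sum_choose_two_card_children_some :
    ∑ y, (#(S.tree.children (some y))).choose 2 = S.twoLegCount 3 := by
  have hchildren (y : S.Vertex) : (#(S.tree.children (some y))).choose 2 =
      if S.isTwoLeg y.1 ∧ y.2.val + 3 = S.order y.1 then 1 else 0 := by
    rw [← choose_two_card_parentPos_eq S.three_le_order, ← card_filter_vertex_leg S]
    simp only [ParentTree.children, parent_eq_some_iff]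
    refine congrArg (Nat.choose · 2) (congrArg card (filter_congr fun x _ => ?_))
    exact and_congr_right fun h => by simp only [h]
  simp only [hchildren, ← card_filter]
  rw [card_filter_vertex S fun i j => S.isTwoLeg i ∧ j + 3 = S.order i,
    twoLegCount_of_le_three le_rfl, card_filter]
  refine sum_congr rfl fun i _ => ?_
  by_cases htwo : S.isTwoLeg i
  · have hthree := S.three_le_order htwo
    rw [if_pos htwo, card_eq_one]
    refine ⟨S.order i - 3, ?_⟩
    ext j
    simp only [htwo, true_and, mem_filter, mem_range, mem_singleton]
    omega
  · simp [htwo]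

theorem cCoeff_three_ones_add :
    cCoeff S.tree.graph
        (3 ::ₘ Multiset.replicate (Fintype.card S.Vertex - 2) 1) + Fintype.card ι =
      Fintype.card S.Vertex + (Fintype.card ι).choose 2 + S.twoLegCount 3 := by
  have hcard := S.card_legs_le_card_vertex
  have hthree := S.three_le_card
  have hchildren := S.tree.card_isSome_parent_add_card_children_none
  rw [S.tree.cCoeff_graph_three_ones (by omega), Fintype.sum_option,
    sum_choose_two_card_children_some]
  rw [card_children_none] at hchildren ⊢
  omega

end SpiderLegs

namespace SpiderLegs

variable {ι ι' : Type} [Fintype ι] [Fintype ι'] {S : SpiderLegs ι} {S' : SpiderLegs ι'}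

theorem order_add_order_lt {i j : ι} (hne : i ≠ j) :
    S.order i + S.order j < Fintype.card S.Vertex := by
  have hlt : #{i, j} < #(univ : Finset ι) := by
    have hthree := S.three_le_card
    rw [card_pair hne, card_univ]
    omega
  obtain ⟨k, -, hk⟩ := exists_mem_notMem_of_card_lt_card hlt
  calc S.order i + S.order j < S.order k + ∑ i' ∈ {i, j}, S.order i' := by
        rw [sum_pair hne]
        exact Nat.lt_add_of_pos_left (S.order_pos k)
    _ = ∑ i' ∈ insert k {i, j}, S.order i' := (sum_insert hk).symm
    _ ≤ Fintype.card S.Vertex := card_vertex (S := S) ▸ sum_le_sum_of_subset (subset_univ _)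

theorem order_lt_card (i : ι) : S.order i < Fintype.card S.Vertex := by
  have hthree := S.three_le_card
  have : Nontrivial ι := Fintype.one_lt_card_iff_nontrivial.1 (by omega)
  obtain ⟨j, hj⟩ := exists_ne i
  have hij := S.order_add_order_lt hj
  omega

theorem three_le_card_vertex : 3 ≤ Fintype.card S.Vertex :=
  S.three_le_card.trans S.card_legs_le_card_vertex

theorem legCount_le_one {k : ℕ} (hk : Fintype.card S.Vertex ≤ 2 * k) : S.legCount k ≤ 1 := by
  refine card_le_one.2 fun i hi j hj => ?_
  by_contra hne
  have hlt := S.order_add_order_lt hne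
  rw [mem_filter_univ] at hi hj
  omega

theorem legCount_ne_zero_iff {k : ℕ} : S.legCount k ≠ 0 ↔ ∃ i, k ≤ S.order i := by
  rw [ne_eq, legCount_eq_zero_iff]
  push Not
  rfl

theorem legCount_card : S.legCount (Fintype.card S.Vertex) = 0 :=
  legCount_eq_zero_iff.2 order_lt_card

theorem sizeCount_add_ite {k : ℕ} (hk : 0 < k) :
    S.tree.sizeCount k + (if k = 2 then S.twoLegCount 3 else 0) =
      S.legCount k + if k = 1 then S.twoLegCount 3 else 0 := by
  obtain rfl | rfl | hk : k = 1 ∨ k = 2 ∨ 3 ≤ k := by omega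
  · exact sizeCount_one
  · exact sizeCount_two_add
  · rw [sizeCount_eq_legCount hk, if_neg (by omega), if_neg (by omega)]

theorem card_vertex_eq (h : cCoeff S.tree.graph = cCoeff S'.tree.graph) :
    Fintype.card S.Vertex = Fintype.card S'.Vertex :=
  Nat.succ_injective (by simpa only [Fintype.card_option] using card_eq_of_cCoeff_eq h)

theorem legCount_one_add_twoLegCount_eq (h : cCoeff S.tree.graph = cCoeff S'.tree.graph) :
    S.legCount 1 + S.twoLegCount 3 = S'.legCount 1 + S'.twoLegCount 3 := by
  have hthree := S.three_le_card_vertex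
  have hsym := ParentTree.sizeCount_add_sizeCount_eq h (by omega) (add_comm 1 _)
  rwa [sizeCount_one, sizeCount_one, sizeCount_eq_legCount hthree, legCount_card, card_vertex_eq h,
    sizeCount_eq_legCount S'.three_le_card_vertex, legCount_card] at hsym

theorem card_legs_eq (h : cCoeff S.tree.graph = cCoeff S'.tree.graph) :
    Fintype.card ι = Fintype.card ι' := by
  have hleaves := legCount_one_add_twoLegCount_eq h
  rw [legCount_one, legCount_one] at hleaves
  have hcoeff := S.cCoeff_three_ones_add
  rw [h, card_vertex_eq h] at hcoeff
  have hcoeff' := S'.cCoeff_three_ones_add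
  have hchoose : (Fintype.card ι).choose 2 + 2 * Fintype.card ι' =
      (Fintype.card ι').choose 2 + 2 * Fintype.card ι := by omega
  have hthree := S.three_le_card
  have hthree' := S'.three_le_card
  have hfactor : ((Fintype.card ι : ℚ) - Fintype.card ι') *
      (Fintype.card ι + Fintype.card ι' - 5) = 0 := by
    have hcast := congrArg (Nat.cast (R := ℚ)) hchoose
    push_cast [Nat.cast_choose_two] at hcast
    linear_combination 2 * hcast
  rcases mul_eq_zero.1 hfactor with hzero | hzero
  · exact_mod_cast sub_eq_zero.1 hzero
  · have hfive : Fintype.card ι + Fintype.card ι' = 5 := by exact_mod_cast sub_eq_zero.1 hzero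
    omega

theorem twoLegCount_three_eq (h : cCoeff S.tree.graph = cCoeff S'.tree.graph) :
    S.twoLegCount 3 = S'.twoLegCount 3 := by
  have hleaves := legCount_one_add_twoLegCount_eq h
  rw [legCount_one, legCount_one, card_legs_eq h] at hleaves
  exact Nat.add_left_cancel hleaves

theorem legCount_add_legCount_eq (h : cCoeff S.tree.graph = cCoeff S'.tree.graph) {k l : ℕ}
    (hk : 0 < k) (hl : 0 < l) (hkl : k + l = Fintype.card S.Vertex + 1) :
    S.legCount k + S.legCount l = S'.legCount k + S'.legCount l := by
  have hsym := ParentTree.sizeCount_add_sizeCount_eq h (by omega) hkl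
  have hSk := S.sizeCount_add_ite hk
  have hSl := S.sizeCount_add_ite hl
  have hS'k := S'.sizeCount_add_ite hk
  have hS'l := S'.sizeCount_add_ite hl
  rw [twoLegCount_three_eq h] at hSk hSl
  omega

/-- If a leg of `S` has order `M`, more than half of the number `N` of non-torso vertices, then
`legCount (M + 1) + legCount (N - M) = 1` while `legCount M + legCount (N - M + 1) = 2`.
Were all legs of `S'` shorter than `M`, its `legCount` would increase from `N - M` to
`N - M + 1`. -/
theorem legCount_order_ne_zero (h : cCoeff S.tree.graph = cCoeff S'.tree.graph) {i : ι}
    (hi : Fintype.card S.Vertex + 1 ≤ 2 * S.order i) : S'.legCount (S.order i) ≠ 0 := by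
  intro hshort
  have hlt := S.order_lt_card i
  have hother {j : ι} {k : ℕ} (hk : Fintype.card S.Vertex ≤ k + S.order i) (hj : k ≤ S.order j) :
      j = i := by
    by_contra hne
    have hij := S.order_add_order_lt hne
    omega
  have hsingle {k : ℕ} (hk : Fintype.card S.Vertex ≤ k + S.order i) (hki : k ≤ S.order i) :
      S.legCount k = 1 := by
    refine card_eq_one.2 ⟨i, eq_singleton_iff_unique_mem.2 ?_⟩
    exact ⟨mem_filter.2 ⟨mem_univ i, hki⟩, fun j hj => hother hk (mem_filter.1 hj).2⟩
  have habove : S.legCount (S.order i + 1) = 0 := legCount_eq_zero_iff.2 fun j => by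
    by_contra! hj
    obtain rfl := hother (by omega) hj
    omega
  have hone := legCount_add_legCount_eq h (k := S.order i + 1)
    (l := Fintype.card S.Vertex - S.order i) (by omega) (by omega) (by omega)
  have htwo := legCount_add_legCount_eq h (k := S.order i)
    (l := Fintype.card S.Vertex - S.order i + 1) (by omega) (by omega) (by omega)
  rw [habove, hsingle (by omega) (by omega)] at hone
  rw [hsingle (by omega) le_rfl, hsingle (by omega) (by omega)] at htwo
  have hmono := S'.legCount_antitone (Nat.le_add_right (Fintype.card S.Vertex - S.order i) 1)
  omega

theorem legCount_ne_zero_of_card_lt (h : cCoeff S.tree.graph = cCoeff S'.tree.graph) {k : ℕ}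
    (hk : Fintype.card S.Vertex + 1 ≤ 2 * k) (hne : S.legCount k ≠ 0) : S'.legCount k ≠ 0 := by
  obtain ⟨i, hi⟩ := legCount_ne_zero_iff.1 hne
  obtain ⟨i', hi'⟩ := legCount_ne_zero_iff.1 (legCount_order_ne_zero h (i := i) (by omega))
  exact legCount_ne_zero_iff.2 ⟨i', hi.trans hi'⟩

theorem legCount_eq (h : cCoeff S.tree.graph = cCoeff S'.tree.graph) {k : ℕ} (hk : 0 < k) :
    S.legCount k = S'.legCount k := by
  have hcard := card_vertex_eq h
  have hlong {l : ℕ} (hl : Fintype.card S.Vertex + 1 ≤ 2 * l) : S.legCount l = S'.legCount l := by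
    have hle : S.legCount l ≤ 1 := legCount_le_one (by omega)
    have hle' : S'.legCount l ≤ 1 := legCount_le_one (by omega)
    have hto := legCount_ne_zero_of_card_lt h hl
    have hfrom := legCount_ne_zero_of_card_lt h.symm (hcard ▸ hl)
    omega
  by_cases hkN : Fintype.card S.Vertex + 1 ≤ 2 * k
  · exact hlong hkN
  · have hsym := legCount_add_legCount_eq h (l := Fintype.card S.Vertex + 1 - k) hk
      (by omega) (by omega)
    rw [hlong (l := Fintype.card S.Vertex + 1 - k) (by omega)] at hsym
    exact Nat.add_right_cancel hsym

theorem twoLegCount_le_legCount (k : ℕ) : S.twoLegCount k ≤ S.legCount k :=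
  card_le_card (monotone_filter_right _ fun _ _ => And.right)

/-- Under these hypotheses one leg is longer than `k` and leaves fewer than `k` vertices to every
other leg. -/
theorem twoLegCount_succ_eq {k : ℕ} (hk : S.legCount (k + 1) ≠ 0)
    (hlong : S.legCount (Fintype.card S.Vertex - k) ≠ 0) :
    S.twoLegCount (k + 1) = S.twoLegCount k := by
  obtain ⟨i, hi⟩ := legCount_ne_zero_iff.1 hk
  obtain ⟨i', hi'⟩ := legCount_ne_zero_iff.1 hlong
  obtain rfl : i = i' := by
    by_contra hne
    have hii' := S.order_add_order_lt hne
    omega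
  refine congrArg card (filter_congr fun j _ => and_congr_right fun _ => ?_)
  refine ⟨fun hj => by omega, fun hj => ?_⟩
  by_cases hne : j = i
  · exact hne ▸ hi
  · have hij := S.order_add_order_lt hne
    omega

theorem twoLegCount_eq (h : cCoeff S.tree.graph = cCoeff S'.tree.graph) (k : ℕ) :
    S.twoLegCount k = S'.twoLegCount k := by
  rcases Nat.le_total k 3 with hk | hk
  · rw [twoLegCount_of_le_three hk, twoLegCount_of_le_three hk, ← twoLegCount_of_le_three le_rfl,
      ← twoLegCount_of_le_three le_rfl, twoLegCount_three_eq h]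
  induction k, hk using Nat.le_induction with
  | base => exact twoLegCount_three_eq h
  | succ k hk ih =>
    have hcard := card_vertex_eq h
    have hsucc := legCount_eq h k.add_one_pos
    by_cases hzero : S.legCount (k + 1) = 0
    · have hle := S.twoLegCount_le_legCount (k + 1)
      have hle' := S'.twoLegCount_le_legCount (k + 1)
      omega
    have hkN : k + 1 < Fintype.card S.Vertex := by
      obtain ⟨i, hi⟩ := legCount_ne_zero_iff.1 hzero
      exact hi.trans_lt (S.order_lt_card i)
    have hrest := legCount_eq h (k := Fintype.card S.Vertex - k) (by omega)
    by_cases hlong : S.legCount (Fintype.card S.Vertex - k) = 0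
    · have htriple := cCoeff_triple_add hk hkN.le hlong
      rw [h, hcard, legCount_eq h one_pos, legCount_eq h (by omega : 0 < k), hsucc,
        twoLegCount_three_eq h, ih, cCoeff_triple_add hk (by omega) (by rw [← hcard]; omega)]
        at htriple
      omega
    · rw [twoLegCount_succ_eq hzero hlong,
        twoLegCount_succ_eq (by omega) (by rw [← hcard]; omega), ih]

theorem twoLegCount_eq_add_succ (k : ℕ) :
    S.twoLegCount k = #{i | S.isTwoLeg i ∧ S.order i = k} + S.twoLegCount (k + 1) := by
  simp only [twoLegCount, card_filter, ← sum_add_distrib]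
  refine sum_congr rfl fun i _ => ?_
  by_cases htwo : S.isTwoLeg i
  · simp only [htwo, true_and]
    split_ifs <;> omega
  · simp [htwo]

theorem legCount_eq_add_succ (k : ℕ) :
    S.legCount k = #{i | S.isTwoLeg i ∧ S.order i = k} + #{i | ¬S.isTwoLeg i ∧ S.order i = k} +
      S.legCount (k + 1) := by
  simp only [legCount, card_filter, ← sum_add_distrib]
  refine sum_congr rfl fun i _ => ?_
  by_cases htwo : S.isTwoLeg i <;>
  · simp only [htwo, true_and, not_true_eq_false, false_and, not_false_eq_true, if_false]
    split_ifs <;> omega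

theorem card_type_order_eq (h : cCoeff S.tree.graph = cCoeff S'.tree.graph) (two : Prop) (k : ℕ) :
    #{i | (S.isTwoLeg i, S.order i) = (two, k)} =
      #{i | (S'.isTwoLeg i, S'.order i) = (two, k)} := by
  have htwoLegs : #{i | S.isTwoLeg i ∧ S.order i = k} =
      #{i | S'.isTwoLeg i ∧ S'.order i = k} := by
    have hS := S.twoLegCount_eq_add_succ k
    rw [twoLegCount_eq h, twoLegCount_eq h, S'.twoLegCount_eq_add_succ] at hS
    exact (Nat.add_right_cancel hS).symm
  by_cases htwo : two
  · simpa only [Prod.mk.injEq, eq_iff_iff, htwo, iff_true] using htwoLegs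
  · simp only [Prod.mk.injEq, eq_iff_iff, htwo, iff_false]
    rcases Nat.eq_zero_or_pos k with rfl | hk
    · simp [(S.order_pos _).ne', (S'.order_pos _).ne']
    · have hS := S.legCount_eq_add_succ k
      have hS' := S'.legCount_eq_add_succ k
      rw [legCount_eq h hk, legCount_eq h k.add_one_pos] at hS
      omega

theorem exists_leg_equiv (h : cCoeff S.tree.graph = cCoeff S'.tree.graph) :
    ∃ σ : ι ≃ ι', ∀ i, (S'.isTwoLeg (σ i) ↔ S.isTwoLeg i) ∧ S'.order (σ i) = S.order i := by
  have hfiber (c : Prop × ℕ) : Nonempty ({i // (S.isTwoLeg i, S.order i) = c} ≃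
      {i // (S'.isTwoLeg i, S'.order i) = c}) := by
    refine ⟨Fintype.equivOfCardEq ?_⟩
    rw [Fintype.card_subtype, Fintype.card_subtype]
    exact card_type_order_eq h c.1 c.2
  let e (c : Prop × ℕ) := (hfiber c).some
  refine ⟨Equiv.ofFiberEquiv e, fun i => ?_⟩
  have hi := Equiv.ofFiberEquiv_map e i
  rwa [Prod.mk.injEq, eq_iff_iff] at hi

/-- The isomorphism induced by a bijection between legs that preserves their types and orders. -/
noncomputable def isoOfLegEquiv (σ : ι ≃ ι')
    (hσ : ∀ i, (S'.isTwoLeg (σ i) ↔ S.isTwoLeg i) ∧ S'.order (σ i) = S.order i) :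
    S.tree.graph ≃g S'.tree.graph :=
  ParentTree.isoOfParentEq (Equiv.sigmaCongr σ fun i => finCongr (hσ i).2.symm) fun x => by
    rcases hx : S.tree.parent x with _ | y
    · exact parent_eq_none_iff.2 (parent_eq_none_iff.1 hx :)
    · obtain ⟨hleg, hne, hpos⟩ := parent_eq_some_iff.1 hx
      refine parent_eq_some_iff.2 ⟨congrArg σ hleg, hne, ?_⟩
      change parentPos (S'.order (σ x.1)) (S'.isTwoLeg (σ x.1)) x.2 = y.2
      rwa [(hσ x.1).2, propext (hσ x.1).1]

end SpiderLegs

section Leg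

variable {V : Type} {T : SimpleGraph V} {t u u' v w : V}

/-- The vertices of `T` that are separated from `t` by the edge from `t` to its neighbour `u`. -/
def leg (T : SimpleGraph V) (t u : V) : Set V :=
  ((T.deleteEdges {s(t, u)}).connectedComponentMk u).supp

theorem mem_leg_iff : v ∈ leg T t u ↔ (T.deleteEdges {s(t, u)}).Reachable v u := by
  rw [leg, ConnectedComponent.mem_supp_iff, ConnectedComponent.eq]

theorem self_mem_leg : u ∈ leg T t u := rfl

theorem torso_notMem_leg (hT : T.IsAcyclic) (hu : T.Adj t u) : t ∉ leg T t u := by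
  rw [mem_leg_iff, ← isBridge_iff]
  exact isAcyclic_iff_forall_adj_isBridge.1 hT hu

theorem ne_torso_of_mem_leg (hT : T.IsAcyclic) (hu : T.Adj t u) (hv : v ∈ leg T t u) : v ≠ t := by
  rintro rfl
  exact torso_notMem_leg hT hu hv

theorem deleteEdges_adj_of_ne (hvw : T.Adj v w) (hv : v ≠ t) (hw : w ≠ t) :
    (T.deleteEdges {s(t, u)}).Adj v w := by
  refine deleteEdges_adj.2 ⟨hvw, fun h => ?_⟩
  rcases Sym2.eq_iff.1 (Set.mem_singleton_iff.1 h) with ⟨rfl, -⟩ | ⟨-, rfl⟩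
  · exact hv rfl
  · exact hw rfl

theorem mem_leg_of_adj (hT : T.IsAcyclic) (hu : T.Adj t u) (hv : v ∈ leg T t u)
    (hvw : T.Adj v w) (hw : w ≠ t) : w ∈ leg T t u :=
  have hadj := deleteEdges_adj_of_ne (u := u) hvw (ne_torso_of_mem_leg hT hu hv) hw
  mem_leg_iff.2 (hadj.symm.reachable.trans (mem_leg_iff.1 hv))

theorem eq_of_mem_leg_of_adj_torso (hT : T.IsAcyclic) (hu : T.Adj t u) (hv : v ∈ leg T t u)
    (hvt : T.Adj v t) : v = u := by
  by_contra hne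
  refine torso_notMem_leg hT hu (mem_leg_iff.2 (Reachable.trans ?_ (mem_leg_iff.1 hv)))
  refine (deleteEdges_adj.2 ⟨hvt.symm, fun h => hne ?_⟩).reachable
  exact Sym2.congr_right.1 (Set.mem_singleton_iff.1 h)

theorem eq_of_mem_leg_of_mem_leg (hT : T.IsAcyclic) (hu : T.Adj t u) (hu' : T.Adj t u')
    (hv : v ∈ leg T t u) (hv' : v ∈ leg T t u') : u = u' := by
  have hclosed {w : V} (hw : (T.deleteEdges {s(t, u')}).Reachable v w) : w ∈ leg T t u := by
    rw [reachable_iff_reflTransGen] at hw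
    induction hw with
    | refl => exact hv
    | @tail x y hvx hxy ih =>
      have hvy := (reachable_iff_reflTransGen _ _).2 (hvx.tail hxy)
      have hy : y ∈ leg T t u' := mem_leg_iff.2 (hvy.symm.trans (mem_leg_iff.1 hv'))
      exact mem_leg_of_adj hT hu ih (deleteEdges_le _ hxy) (ne_torso_of_mem_leg hT hu' hy)
  exact (eq_of_mem_leg_of_adj_torso hT hu (hclosed (mem_leg_iff.1 hv')) hu'.symm).symm

theorem exists_mem_leg (hT : T.IsTree) (hv : v ≠ t) : ∃ u, T.Adj t u ∧ v ∈ leg T t u := by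
  have hreach := (reachable_iff_reflTransGen _ _).1 (hT.connected.preconnected t v)
  induction hreach with
  | refl => exact absurd rfl hv
  | @tail w v _ hwv ih =>
    by_cases hw : w = t
    · exact ⟨v, hw ▸ hwv, self_mem_leg⟩
    · obtain ⟨u, hu, hmem⟩ := ih hw
      exact ⟨u, hu, mem_leg_of_adj hT.isAcyclic hu hmem hwv hv⟩

theorem induce_leg_deleteEdges (hT : T.IsAcyclic) (hu : T.Adj t u) :
    (T.deleteEdges {s(t, u)}).induce (leg T t u) = T.induce (leg T t u) := by
  ext v w
  simp only [comap_adj, Function.Embedding.subtype_apply]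
  exact ⟨fun h => deleteEdges_le _ h, fun h => deleteEdges_adj_of_ne h
    (ne_torso_of_mem_leg hT hu v.2) (ne_torso_of_mem_leg hT hu w.2)⟩

/-- The partition of the vertices other than `t` into the legs at `t`. -/
noncomputable def sigmaLegEquiv (hT : T.IsTree) (t : V) :
    (Σ u : {u // T.Adj t u}, leg T t u) ≃ {v // v ≠ t} :=
  Equiv.ofBijective (fun x => ⟨x.2, ne_torso_of_mem_leg hT.isAcyclic x.1.2 x.2.2⟩) <| by
    constructor
    · rintro ⟨⟨u, hu⟩, ⟨v, hv⟩⟩ ⟨⟨u', hu'⟩, ⟨v', hv'⟩⟩ h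
      obtain rfl : v = v' := congrArg Subtype.val h
      obtain rfl := eq_of_mem_leg_of_mem_leg hT.isAcyclic hu hu' hv hv'
      rfl
    · rintro ⟨v, hv⟩
      obtain ⟨u, hu, hmem⟩ := exists_mem_leg hT hv
      exact ⟨⟨⟨u, hu⟩, ⟨v, hmem⟩⟩, rfl⟩

theorem coe_sigmaLegEquiv (hT : T.IsTree) (x : Σ u : {u // T.Adj t u}, leg T t u) :
    (sigmaLegEquiv hT t x : V) = x.2 :=
  rfl

/-- The leg of order `n` of the given type, rooted at `0`. -/
noncomputable def legGraph (n : ℕ) (two : Prop) : SimpleGraph (Fin n) :=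
  fromRel fun j k => j.val ≠ 0 ∧ parentPos n two j = k.val

theorem legGraph_adj {n : ℕ} {two : Prop} (h : two → 3 ≤ n) {j k : Fin n} :
    (legGraph n two).Adj j k ↔
      (j.val ≠ 0 ∧ parentPos n two j = k.val) ∨ (k.val ≠ 0 ∧ parentPos n two k = j.val) := by
  rw [legGraph, fromRel_adj, and_iff_right_iff_imp]
  rintro (⟨hj, hjk⟩ | ⟨hk, hkj⟩) rfl
  · exact (parentPos_lt h hj).ne hjk
  · exact (parentPos_lt h hk).ne hkj

theorem legGraph_false (n : ℕ) : legGraph n False = pathGraph n := by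
  ext j k
  rw [legGraph_adj False.elim, pathGraph_adj]
  simp only [parentPos, false_and, if_false]
  omega

theorem legGraph_true {n : ℕ} (hn : 3 ≤ n) : legGraph n True = Rtwo n := by
  ext j k
  have hj := j.isLt
  have hk := k.isLt
  rw [legGraph_adj fun _ => hn, Rtwo, fromRel_adj, ne_eq j k, Fin.ext_iff]
  simp only [parentPos, true_and]
  split_ifs <;> omega

theorem exists_legGraph_iso (hT : T.IsAcyclic) (hu : T.Adj t u)
    (hleg : IsOneLegAt T t u ∨ IsTwoLegAt T t u) :
    ∃ (n : ℕ) (two : Prop) (hn : 0 < n) (_ : two → 3 ≤ n)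
      (φ : legGraph n two ≃g T.induce (leg T t u)), (φ ⟨0, hn⟩ : V) = u := by
  rw [← induce_leg_deleteEdges hT hu]
  rcases hleg with ⟨n, hn, -, -, φ, hφ⟩ | ⟨n, hn, -, -, φ, hφ⟩
  · refine ⟨n, False, hn, False.elim, ?_⟩
    rw [legGraph_false]
    exact ⟨φ, hφ⟩
  · refine ⟨n, True, by omega, fun _ => hn, ?_⟩
    rw [legGraph_true hn]
    exact ⟨φ, hφ⟩

theorem adj_torso_iff {n : ℕ} {two : Prop} (hn : 0 < n) (hT : T.IsAcyclic) (hu : T.Adj t u)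
    (φ : legGraph n two ≃g T.induce (leg T t u)) (hφ : (φ ⟨0, hn⟩ : V) = u) (j : Fin n) :
    T.Adj t (φ j) ↔ j.val = 0 := by
  constructor
  · intro hadj
    have hj := eq_of_mem_leg_of_adj_torso hT hu (φ j).2 hadj.symm
    exact congrArg Fin.val (φ.injective (Subtype.ext (hj.trans hφ.symm)))
  · intro hj
    obtain rfl : j = ⟨0, hn⟩ := Fin.ext hj
    rwa [hφ]

end Leg

theorem ParentTree.graph_adj_iff {X : Type} {R : ParentTree X} {u v : Option X} :
    R.graph.Adj u v ↔
      (∃ x, u = some x ∧ R.parent x = v) ∨ ∃ x, v = some x ∧ R.parent x = u := by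
  have hne (x : X) : some x ≠ R.parent x := (parent_ne_some_self x).symm
  rw [graph, fromEdgeSet_adj]
  constructor
  · rintro ⟨⟨x, hx⟩, -⟩
    rcases Sym2.eq_iff.1 hx with ⟨hu, hv⟩ | ⟨hv, hu⟩
    · exact .inl ⟨x, hu.symm, hv⟩
    · exact .inr ⟨x, hv.symm, hu⟩
  · rintro (⟨x, rfl, rfl⟩ | ⟨x, rfl, rfl⟩)
    · exact ⟨⟨x, rfl⟩, hne x⟩
    · exact ⟨⟨x, Sym2.eq_swap⟩, (hne x).symm⟩

namespace SpiderLegs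

variable {V : Type} {T : SimpleGraph V} {t : V} [Fintype {u // T.Adj t u}]
  {S : SpiderLegs {u // T.Adj t u}}

theorem adj_leg_iff (hT : T.IsTree)
    (φ : ∀ u, legGraph (S.order u) (S.isTwoLeg u) ≃g T.induce (leg T t u)) (x y : S.Vertex) :
    T.Adj (φ x.1 x.2) (φ y.1 y.2) ↔ S.tree.parent x = some y ∨ S.tree.parent y = some x := by
  rw [parent_eq_some_iff, parent_eq_some_iff]
  obtain ⟨u, j⟩ := x
  obtain ⟨u', k⟩ := y
  by_cases hleg : u = u'
  · subst hleg
    simpa using (φ u).map_adj_iff.trans (legGraph_adj S.three_le_order)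
  · refine iff_of_false (fun hadj => hleg (Subtype.ext ?_)) ?_
    · have hne := ne_torso_of_mem_leg hT.isAcyclic u'.2 (φ u' k).2
      have hmem := mem_leg_of_adj hT.isAcyclic u.2 (φ u j).2 hadj hne
      exact eq_of_mem_leg_of_mem_leg hT.isAcyclic u.2 u'.2 hmem (φ u' k).2
    · rintro (⟨h, -⟩ | ⟨h, -⟩)
      · exact hleg h
      · exact hleg h.symm

/-- The isomorphism from the tree built from the legs at `t` to the given 2-spider with torso `t`,
glued from isomorphisms between the legs. -/
noncomputable def isoOfLegIso (hT : T.IsTree)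
    (φ : ∀ u, legGraph (S.order u) (S.isTwoLeg u) ≃g T.induce (leg T t u))
    (hφ : ∀ u, (φ u ⟨0, S.order_pos u⟩ : V) = u) : S.tree.graph ≃g T where
  toEquiv := (Equiv.optionCongr ((Equiv.sigmaCongrRight fun u => (φ u).toEquiv).trans
    (sigmaLegEquiv hT t))).trans (Equiv.optionSubtypeNe t)
  map_rel_iff' {o o'} := by
    have hroot (x : S.Vertex) : T.Adj t (φ x.1 x.2) ↔ S.tree.parent x = none :=
      (adj_torso_iff (S.order_pos x.1) hT.isAcyclic x.1.2 (φ x.1) (hφ x.1) x.2).trans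
        parent_eq_none_iff.symm
    rw [ParentTree.graph_adj_iff]
    rcases o with _ | x <;> rcases o' with _ | y
    · simp
    · simpa [coe_sigmaLegEquiv] using hroot y
    · simpa [coe_sigmaLegEquiv] using (T.adj_comm _ _).trans (hroot x)
    · simpa [coe_sigmaLegEquiv] using adj_leg_iff hT φ x y

end SpiderLegs

theorem exists_spiderLegs_iso {V : Type} [Finite V] {T : SimpleGraph V} (hT : IsTwoSpider T) :
    ∃ (ι : Type) (_ : Fintype ι) (S : SpiderLegs ι), Nonempty (S.tree.graph ≃g T) := by
  obtain ⟨t, htree, hdegree, hlegs⟩ := hT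
  have := Fintype.ofFinite {u // T.Adj t u}
  choose order isTwoLeg hpos hthree φ hφ using
    fun u : {u // T.Adj t u} => exists_legGraph_iso htree.isAcyclic u.2 (hlegs u u.2)
  have hcard : 3 ≤ Fintype.card {u // T.Adj t u} := by
    rwa [← Nat.card_eq_fintype_card]
  exact ⟨_, inferInstance, ⟨order, isTwoLeg, hpos, fun {u} => hthree u, hcard⟩,
    ⟨SpiderLegs.isoOfLegIso htree φ hφ⟩⟩

end

/-- Theorem 2: two 2-spiders of the same order with the same coefficients `c_λ` for every
partition `λ` of their order (equivalently, with equal chromatic symmetric functions) are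
isomorphic as graphs. -/
theorem twoSpiders_distinguished {V₁ V₂ : Type} [Fintype V₁] [Fintype V₂]
    (T₁ : SimpleGraph V₁) (T₂ : SimpleGraph V₂) (d : ℕ)
    (hd₁ : Fintype.card V₁ = d) (hd₂ : Fintype.card V₂ = d)
    (h₁ : IsTwoSpider T₁) (h₂ : IsTwoSpider T₂)
    (hc : ∀ lam : Multiset ℕ, (∀ i ∈ lam, 0 < i) → lam.sum = d →
      cCoeff T₁ lam = cCoeff T₂ lam) :
    Nonempty (T₁ ≃g T₂) := by
  obtain ⟨ι₁, _, S₁, ⟨φ₁⟩⟩ := exists_spiderLegs_iso h₁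
  obtain ⟨ι₂, _, S₂, ⟨φ₂⟩⟩ := exists_spiderLegs_iso h₂
  have hcoeff : cCoeff T₁ = cCoeff T₂ :=
    cCoeff_eq_of_forall_partition (hd₁.trans hd₂.symm) fun lam hpos hsum =>
      hc lam hpos (hsum.trans hd₁)
  have hmodel : cCoeff S₁.tree.graph = cCoeff S₂.tree.graph := by
    rw [cCoeff_congr φ₁, hcoeff, cCoeff_congr φ₂]
  obtain ⟨σ, hσ⟩ := SpiderLegs.exists_leg_equiv hmodel
  exact ⟨φ₁.symm.trans ((SpiderLegs.isoOfLegEquiv σ hσ).trans φ₂)⟩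
end

section
/- Let T be a 2-spider of order d ≥ 6 having exactly three legs, two of which have order one. Then either ρ_{3,2}(T) = 1 and T has 3 leaves, or ρ_{3,2}(T) = 2 and T has 4 leaves; moreover, in both cases the number of 2-legs of T equals ρ_{3,2}(T) − 1. -/
open SimpleGraph

/-!
Cut the tree at the torso `t`: every other vertex lies in exactly one branch hanging off a neighbour
of `t`. A 1-leg contains one leaf and no vertex at which an `R_{3,2}` is rooted, while a 2-leg
contains two leaves and exactly one `R_{3,2}`. So in every 2-spider with `k` 2-legs the number of
leaves is `deg t + k`, and `ρ_{3,2}` is `k` plus the number of copies of `R_{3,2}` rooted at `t`.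

If `t` has three legs, two of them single vertices, and the tree has more than four vertices, then
the third neighbour of `t` is not a leaf. Hence exactly one `R_{3,2}` is rooted at `t`, formed by
`t` and its two leaves, and only the third leg can be a 2-leg. So `k ≤ 1`, `ρ_{3,2} = 1 + k` and
there are `3 + k` leaves.
-/

section Branch

variable {V : Type*} {T : SimpleGraph V} {t u v x y : V}

/-- The vertex set of the branch of `T` at `u` as seen from `t`, i.e. the component of `u` after
deleting the edge `{t, u}`; its size is `legOrder T t u`. -/
def branch (T : SimpleGraph V) (t u : V) : Set V :=
  ((T.deleteEdges {s(t, u)}).connectedComponentMk u).supp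

theorem mem_branch_iff : x ∈ branch T t u ↔ (T.deleteEdges {s(t, u)}).Reachable x u := by
  rw [branch, ConnectedComponent.mem_supp_iff, ConnectedComponent.eq]

theorem self_mem_branch : u ∈ branch T t u :=
  mem_branch_iff.2 .rfl

theorem notMem_branch (hT : T.IsAcyclic) (htu : T.Adj t u) : t ∉ branch T t u := by
  rw [mem_branch_iff]
  exact isBridge_iff.1 (isAcyclic_iff_forall_adj_isBridge.1 hT htu)

theorem mem_branch_of_adj (hx : x ∈ branch T t u) (hxy : T.Adj x y) (hyt : y ≠ t) :
    y ∈ branch T t u := by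
  by_cases hyu : y = u
  · exact hyu ▸ self_mem_branch
  · have hadj : (T.deleteEdges {s(t, u)}).Adj y x := by
      simp [deleteEdges_adj, hxy.symm, hyt, hyu]
    exact mem_branch_iff.2 (hadj.reachable.trans (mem_branch_iff.1 hx))

theorem eq_of_mem_branch_of_adj (hT : T.IsAcyclic) (htu : T.Adj t u) (hx : x ∈ branch T t u)
    (hxt : T.Adj x t) : x = u := by
  by_contra hxu
  have hadj : (T.deleteEdges {s(t, u)}).Adj t x := by
    simp [deleteEdges_adj, hxt.symm, hxu, htu.ne]
  exact notMem_branch hT htu (mem_branch_iff.2 (hadj.reachable.trans (mem_branch_iff.1 hx)))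

theorem branch_subset {s : Set V} (ht : t ∉ branch T t u) (hx : x ∈ branch T t u) (hxs : x ∈ s)
    (hs : ∀ a ∈ s, ∀ b, T.Adj a b → b ≠ t → b ∈ s) : branch T t u ⊆ s := by
  intro y hy
  have hxy := (mem_branch_iff.1 hx).trans (mem_branch_iff.1 hy).symm
  rw [reachable_iff_reflTransGen] at hxy
  induction hxy with
  | refl => exact hxs
  | @tail b c _ hbc ih =>
    have hb : b ∈ branch T t u := mem_branch_iff.2 (hbc.reachable.trans (mem_branch_iff.1 hy))
    exact hs b (ih hb) c (deleteEdges_adj.1 hbc).1 fun hct => ht (hct ▸ hy)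

theorem eq_of_mem_branch_of_mem_branch (hT : T.IsAcyclic) (htu : T.Adj t u) (htv : T.Adj t v)
    (hxu : x ∈ branch T t u) (hxv : x ∈ branch T t v) : u = v :=
  have hsub : branch T t u ⊆ branch T t v :=
    branch_subset (notMem_branch hT htu) hxu hxv fun _ ha _ hab hbt => mem_branch_of_adj ha hab hbt
  eq_of_mem_branch_of_adj hT htv (hsub self_mem_branch) htu.symm

theorem exists_mem_branch (hT : T.Connected) (hxt : x ≠ t) :
    ∃ u, T.Adj t u ∧ x ∈ branch T t u := by
  have hreach := hT.preconnected t x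
  rw [reachable_iff_reflTransGen] at hreach
  induction hreach with
  | refl => exact absurd rfl hxt
  | @tail b c _ hbc ih =>
    by_cases hbt : b = t
    · exact ⟨c, hbt ▸ hbc, self_mem_branch⟩
    · obtain ⟨u, htu, hb⟩ := ih hbt
      exact ⟨u, htu, mem_branch_of_adj hb hbc hxt⟩

theorem ncard_eq_add_sum_branch {α : Type*} [Finite α] (hT : T.IsTree) (t : V)
    [Fintype (T.neighborSet t)] (f : α → V) (p : α → Prop) :
    {a | p a}.ncard = {a | p a ∧ f a = t}.ncard +
      ∑ u ∈ T.neighborFinset t, {a | p a ∧ f a ∈ branch T t u}.ncard := by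
  have hcover : {a | p a} = {a | p a ∧ f a = t} ∪
      ⋃ u ∈ (T.neighborFinset t : Set V), {a | p a ∧ f a ∈ branch T t u} := by
    ext a
    have := exists_mem_branch (x := f a) (t := t) hT.connected
    simp only [Set.mem_union, Set.mem_iUnion, Set.mem_ofPred_eq, Finset.mem_coe,
      mem_neighborFinset, exists_prop]
    tauto
  have hdisj : Disjoint {a | p a ∧ f a = t}
      (⋃ u ∈ (T.neighborFinset t : Set V), {a | p a ∧ f a ∈ branch T t u}) := by
    simp only [Set.disjoint_left, Set.mem_iUnion, Finset.mem_coe, mem_neighborFinset]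
    rintro a ⟨-, rfl⟩ ⟨u, htu, -, ha⟩
    exact notMem_branch hT.isAcyclic htu ha
  have hpair : (T.neighborFinset t : Set V).PairwiseDisjoint
      fun u => {a | p a ∧ f a ∈ branch T t u} := by
    intro u hu v hv huv
    rw [Function.onFun, Set.disjoint_left]
    simp only [Finset.mem_coe, mem_neighborFinset] at hu hv
    exact fun a hau hav => huv (eq_of_mem_branch_of_mem_branch hT.isAcyclic hu hv hau.2 hav.2)
  rw [hcover, Set.ncard_union_eq hdisj (Set.toFinite _) (Set.toFinite _),
    Set.Finite.ncard_biUnion (Finset.finite_toSet _) (fun _ _ => Set.toFinite _) hpair,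
    finsum_mem_coe_finset]

end Branch

section Leaf

variable {V : Type*} {T : SimpleGraph V} {t u v w x y z a b : V}

/-- A vertex of degree one, in the form counted by `leafCount`. -/
def IsLeaf (T : SimpleGraph V) (v : V) : Prop :=
  (T.neighborSet v).ncard = 1

theorem IsLeaf.eq_of_adj (hx : IsLeaf T x) (hxy : T.Adj x y) (hxz : T.Adj x z) : y = z := by
  obtain ⟨w, hw⟩ := Set.ncard_eq_one.1 hx
  have hall : ∀ y ∈ T.neighborSet x, y = w := by simp [hw]
  exact (hall y hxy).trans (hall z hxz).symm

theorem ncard_branch_eq_one_iff (hT : T.IsAcyclic) (htu : T.Adj t u) :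
    (branch T t u).ncard = 1 ↔ IsLeaf T u := by
  constructor
  · intro h
    obtain ⟨a, ha⟩ := Set.ncard_eq_one.1 h
    obtain rfl : u = a := by simpa [ha] using self_mem_branch (T := T) (t := t) (u := u)
    refine Set.ncard_eq_one.2 ⟨t, Set.eq_singleton_iff_unique_mem.2 ⟨htu.symm, fun y huy => ?_⟩⟩
    by_contra hyt
    have hyu : y ∈ ({u} : Set V) := ha ▸ mem_branch_of_adj self_mem_branch huy hyt
    exact huy.ne' hyu
  · intro hu
    refine Set.ncard_eq_one.2 ⟨u, Set.Subset.antisymm ?_ (by simpa using self_mem_branch)⟩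
    refine branch_subset (notMem_branch hT htu) self_mem_branch rfl ?_
    rintro _ rfl b hub hbt
    exact absurd (hu.eq_of_adj hub htu.symm) hbt

/-- The pair `(v, w)` is a cherry if `v` has exactly two neighbours besides `w`, both of them
leaves. In a tree this says that deleting `{v, w}` leaves `R_{3,2}` rooted at `v`. -/
def IsCherry (T : SimpleGraph V) (v w : V) : Prop :=
  T.Adj v w ∧ (T.neighborSet v).ncard = 3 ∧ ∀ y, T.Adj v y → y ≠ w → IsLeaf T y

theorem isCherry_iff_eq (hv : (T.neighborSet v).ncard = 3) (hva : T.Adj v a) (hvb : T.Adj v b)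
    (hab : a ≠ b) (ha : IsLeaf T a) (hb : IsLeaf T b) (hvx : T.Adj v x) (hx : ¬ IsLeaf T x) :
    IsCherry T v w ↔ w = x := by
  constructor
  · rintro ⟨-, -, hleaf⟩
    by_contra hwx
    exact hx (hleaf x hvx (Ne.symm hwx))
  · rintro rfl
    have hwa : w ≠ a := fun h => hx (h ▸ ha)
    have hwb : w ≠ b := fun h => hx (h ▸ hb)
    have hN : {w, a, b} = T.neighborSet v := by
      refine Set.eq_of_subset_of_ncard_le ?_ ?_ (Set.finite_of_ncard_pos (by omega))
      · simp [Set.insert_subset_iff, hvx, hva, hvb]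
      · rw [hv, Set.ncard_eq_three.2 ⟨w, a, b, hwa, hwb, hab, rfl⟩]
    refine ⟨hvx, hv, fun y hvy hyw => ?_⟩
    have hy : y ∈ ({w, a, b} : Set V) := hN ▸ hvy
    rcases hy with rfl | rfl | rfl
    exacts [absurd rfl hyw, ha, hb]

end Leaf

section Embedding

variable {V W : Type} {T : SimpleGraph V} {R : SimpleGraph W} {r : W} {t u : V}

theorem isRootedSubtree_iff_exists_embedding (hT : T.IsAcyclic) (htu : T.Adj t u) :
    IsRootedSubtree T s(t, u) u R r ↔ ∃ g : R ↪g T, g r = u ∧ Set.range g = branch T t u := by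
  have hinduce : (T.deleteEdges {s(t, u)}).induce (branch T t u) = T.induce (branch T t u) := by
    ext ⟨x, hx⟩ ⟨y, hy⟩
    have hxt : x ≠ t := fun h => notMem_branch hT htu (h ▸ hx)
    have hyt : y ≠ t := fun h => notMem_branch hT htu (h ▸ hy)
    simp [deleteEdges_adj, hxt, hyt]
  change (T.Adj t u ∧ u ∈ s(t, u) ∧ ∃ φ : R ≃g (T.deleteEdges {s(t, u)}).induce (branch T t u),
    (φ r : V) = u) ↔ _
  rw [hinduce]
  constructor
  · rintro ⟨-, -, φ, hφ⟩
    refine ⟨(Embedding.induce (branch T t u)).comp φ.toEmbedding, hφ, ?_⟩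
    change Set.range (Subtype.val ∘ φ) = branch T t u
    rw [φ.surjective.range_comp, Subtype.range_coe]
  · rintro ⟨g, hr, hg⟩
    refine ⟨htu, Sym2.mem_mk_right t u, ?_⟩
    rw [← hg]
    exact ⟨g.isoInduceRange, hr⟩

/-- The degree of `i` in the tree obtained from `(R, r)` by joining a new vertex to the root; it is
the degree of the corresponding vertex of a tree having `(R, r)` as a rooted subtree. -/
noncomputable def plantedDegree [DecidableEq W] (R : SimpleGraph W) (r i : W) : ℕ :=
  (R.neighborSet i).ncard + if i = r then 1 else 0

theorem ncard_neighborSet_embedding [Finite W] [DecidableEq W] (hT : T.IsAcyclic)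
    (htu : T.Adj t u) {g : R ↪g T} (hr : g r = u) (hg : Set.range g = branch T t u) (i : W) :
    (T.neighborSet (g i)).ncard = plantedDegree R r i := by
  have hmem (j : W) : g j ∈ branch T t u := hg ▸ Set.mem_range_self j
  have hne (j : W) : g j ≠ t := fun h => notMem_branch hT htu (h ▸ hmem j)
  have hN : T.neighborSet (g i) = g '' R.neighborSet i ∪ {y | y = t ∧ i = r} := by
    ext y
    constructor
    · intro hy
      by_cases hyt : y = t
      · subst hyt
        exact .inr ⟨rfl, g.injective (hr ▸ eq_of_mem_branch_of_adj hT htu (hmem i) hy)⟩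
      · obtain ⟨j, rfl⟩ : y ∈ Set.range g := hg ▸ mem_branch_of_adj (hmem i) hy hyt
        exact .inl ⟨j, g.map_adj_iff.1 hy, rfl⟩
    · rintro (⟨j, hj, rfl⟩ | ⟨rfl, rfl⟩)
      · exact g.map_adj_iff.2 hj
      · exact hr ▸ htu.symm
  have hdisj : Disjoint (g '' R.neighborSet i) {y | y = t ∧ i = r} := by
    rw [Set.disjoint_left]
    rintro _ ⟨j, -, rfl⟩ ⟨h, -⟩
    exact hne j h
  have hfin : {y | y = t ∧ i = r}.Finite := (Set.finite_singleton t).subset fun _ h => h.1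
  rw [hN, Set.ncard_union_eq hdisj (Set.toFinite _) hfin,
    Set.ncard_image_of_injective _ g.injective, plantedDegree]
  split_ifs with h <;> simp [h]

theorem IsRootedSubtree.ncard_leaves_branch [Finite W] [DecidableEq W]
    (h : IsRootedSubtree T s(t, u) u R r) (hT : T.IsAcyclic) :
    {v | IsLeaf T v ∧ v ∈ branch T t u}.ncard = {i | plantedDegree R r i = 1}.ncard := by
  obtain ⟨g, hr, hg⟩ := (isRootedSubtree_iff_exists_embedding hT h.1).1 h
  rw [← Set.ncard_image_of_injective _ g.injective, ← hg]
  congr 1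
  ext v
  constructor
  · rintro ⟨hv, i, rfl⟩
    exact ⟨i, (ncard_neighborSet_embedding hT h.1 hr hg i).symm.trans hv, rfl⟩
  · rintro ⟨i, hi, rfl⟩
    exact ⟨(ncard_neighborSet_embedding hT h.1 hr hg i).trans hi, i, rfl⟩

end Embedding

section PlantedDegree

variable {n : ℕ}

theorem plantedDegree_pathGraph (hn : 0 < n) (i : Fin n) :
    plantedDegree (pathGraph n) ⟨0, hn⟩ i = if i.val + 1 = n then 1 else 2 := by
  simp only [plantedDegree, Fin.ext_iff]
  by_cases hfirst : i.val = 0 <;> by_cases hlast : i.val + 1 = n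
  · have hN : (pathGraph n).neighborSet i = ∅ := by
      ext j; grind [mem_neighborSet, pathGraph_adj]
    rw [hN, Set.ncard_empty, if_pos hfirst, if_pos hlast]
  · have hN : (pathGraph n).neighborSet i = {⟨1, by omega⟩} := by
      ext j; grind [mem_neighborSet, pathGraph_adj]
    rw [hN, Set.ncard_singleton, if_pos hfirst, if_neg hlast]
  · have hN : (pathGraph n).neighborSet i = {⟨i - 1, by omega⟩} := by
      ext j; grind [mem_neighborSet, pathGraph_adj]
    rw [hN, Set.ncard_singleton, if_neg hfirst, if_pos hlast]
  · have hN : (pathGraph n).neighborSet i = {⟨i - 1, by omega⟩, ⟨i + 1, by omega⟩} := by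
      ext j; grind [mem_neighborSet, pathGraph_adj]
    rw [hN, Set.ncard_pair (by simp [Fin.ext_iff]), if_neg hfirst, if_neg hlast]

theorem Rtwo_adj (hn : 3 ≤ n) (i j : Fin n) : (Rtwo n).Adj i j ↔
    (j.val = i.val + 1 ∧ j.val + 2 ≤ n) ∨ (i.val + 3 = n ∧ j.val + 1 = n) ∨
    (i.val = j.val + 1 ∧ i.val + 2 ≤ n) ∨ (j.val + 3 = n ∧ i.val + 1 = n) := by
  rw [Rtwo, fromRel_adj, ne_eq, Fin.ext_iff]
  omega

theorem plantedDegree_Rtwo (hn : 3 ≤ n) (i : Fin n) :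
    plantedDegree (Rtwo n) ⟨0, by omega⟩ i =
      if n ≤ i.val + 2 then 1 else if i.val + 3 = n then 3 else 2 := by
  simp only [plantedDegree, Fin.ext_iff]
  by_cases htip : n ≤ i.val + 2
  · have hN : (Rtwo n).neighborSet i = {⟨n - 3, by omega⟩} := by
      ext j; grind [mem_neighborSet, Rtwo_adj hn]
    rw [hN, Set.ncard_singleton, if_neg (by omega), if_pos htip]
  by_cases hfork : i.val + 3 = n <;> by_cases hfirst : i.val = 0
  · have hN : (Rtwo n).neighborSet i = {⟨n - 2, by omega⟩, ⟨n - 1, by omega⟩} := by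
      ext j; grind [mem_neighborSet, Rtwo_adj hn]
    rw [hN, Set.ncard_pair (by grind), if_pos hfirst, if_neg htip, if_pos hfork]
  · have hN : (Rtwo n).neighborSet i =
        {⟨n - 4, by omega⟩, ⟨n - 2, by omega⟩, ⟨n - 1, by omega⟩} := by
      ext j; grind [mem_neighborSet, Rtwo_adj hn]
    have hcard : ((Rtwo n).neighborSet i).ncard = 3 :=
      Set.ncard_eq_three.2 ⟨_, _, _, by grind, by grind, by grind, hN⟩
    rw [hcard, if_neg hfirst, if_neg htip, if_pos hfork]
  · have hN : (Rtwo n).neighborSet i = {⟨1, by omega⟩} := by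
      ext j; grind [mem_neighborSet, Rtwo_adj hn]
    rw [hN, Set.ncard_singleton, if_pos hfirst, if_neg htip, if_neg hfork]
  · have hN : (Rtwo n).neighborSet i = {⟨i - 1, by omega⟩, ⟨i + 1, by omega⟩} := by
      ext j; grind [mem_neighborSet, Rtwo_adj hn]
    rw [hN, Set.ncard_pair (by simp [Fin.ext_iff]), if_neg hfirst, if_neg htip, if_neg hfork]

end PlantedDegree

section Cherry

variable {V : Type} {T : SimpleGraph V} {v w : V}

theorem IsCherry.exists_embedding (hT : T.IsAcyclic) (h : IsCherry T v w) :
    ∃ g : Rtwo 3 ↪g T, g 0 = v ∧ Set.range g = branch T w v := by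
  obtain ⟨hvw, h3, hleaf⟩ := h
  obtain ⟨a, b, hab, hN⟩ : ∃ a b, a ≠ b ∧ T.neighborSet v \ {w} = {a, b} :=
    Set.ncard_eq_two.1 <| by
      rw [Set.ncard_sdiff_singleton_of_mem ((T.mem_neighborSet v w).2 hvw), h3]
  have hmem (y : V) : T.Adj v y ∧ y ≠ w ↔ y = a ∨ y = b := by
    simpa using Set.ext_iff.1 hN y
  obtain ⟨hva, haw⟩ := (hmem a).2 (.inl rfl)
  obtain ⟨hvb, hbw⟩ := (hmem b).2 (.inr rfl)
  have hadj_a (y : V) : T.Adj a y ↔ y = v :=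
    ⟨fun h => (hleaf a hva haw).eq_of_adj h hva.symm, fun h => h ▸ hva.symm⟩
  have hadj_b (y : V) : T.Adj b y ↔ y = v :=
    ⟨fun h => (hleaf b hvb hbw).eq_of_adj h hvb.symm, fun h => h ▸ hvb.symm⟩
  have hinj : Function.Injective ![v, a, b] := by
    intro i j
    fin_cases i <;> fin_cases j <;> simp [hva.ne, hva.ne', hvb.ne, hvb.ne', hab, hab.symm]
  have hadj (i j : Fin 3) : T.Adj (![v, a, b] i) (![v, a, b] j) ↔ (Rtwo 3).Adj i j := by
    rw [Rtwo_adj le_rfl]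
    fin_cases i <;> fin_cases j <;>
      simp [hadj_a, hadj_b, hva, hvb, hva.ne', hvb.ne']
  refine ⟨⟨⟨![v, a, b], hinj⟩, hadj _ _⟩, rfl, ?_⟩
  have hself : v ∈ branch T w v := self_mem_branch
  change Set.range ![v, a, b] = branch T w v
  rw [Matrix.range_cons, Matrix.range_cons_cons_empty]
  refine Set.Subset.antisymm ?_ (branch_subset (notMem_branch hT hvw.symm) hself (.inl rfl) ?_)
  · rintro _ (rfl | rfl | rfl)
    exacts [hself, mem_branch_of_adj hself hva haw, mem_branch_of_adj hself hvb hbw]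
  · rintro _ (rfl | rfl | rfl) y hy hyw
    · exact .inr ((hmem y).1 ⟨hy, hyw⟩)
    · exact .inl ((hadj_a y).1 hy)
    · exact .inl ((hadj_b y).1 hy)

theorem isRootedSubtree_Rtwo_three_iff (hT : T.IsAcyclic) :
    IsRootedSubtree T s(w, v) v (Rtwo 3) 0 ↔ IsCherry T v w := by
  constructor
  · intro h
    have hwv : T.Adj w v := h.1
    obtain ⟨g, rfl, hg⟩ := (isRootedSubtree_iff_exists_embedding hT hwv).1 h
    have hdeg (i : Fin 3) := (ncard_neighborSet_embedding hT hwv rfl hg i).trans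
      (plantedDegree_Rtwo le_rfl i)
    refine ⟨hwv.symm, by simpa using hdeg 0, fun y hvy hyw => ?_⟩
    obtain ⟨i, rfl⟩ : y ∈ Set.range g := hg ▸ mem_branch_of_adj self_mem_branch hvy hyw
    have hi : i.val ≠ 0 := fun h => hvy.ne (congrArg g (Fin.ext h.symm))
    rw [IsLeaf, hdeg, if_pos (by omega)]
  · intro h
    exact (isRootedSubtree_iff_exists_embedding hT h.1.symm).2 (h.exists_embedding hT)

theorem rho_Rtwo_three [Fintype V] (hT : T.IsAcyclic) :
    rho T (Rtwo 3) 0 = {p : V × V | IsCherry T p.1 p.2}.ncard := by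
  symm
  refine Set.ncard_congr (fun p _ => (s(p.2, p.1), p.1))
    (fun _ hp => (isRootedSubtree_Rtwo_three_iff hT).2 hp) ?_ ?_
  · rintro ⟨v, w⟩ ⟨v', w'⟩ - - h
    obtain ⟨hedge, rfl⟩ := Prod.mk.inj h
    exact Prod.ext rfl (Sym2.congr_left.1 hedge)
  · rintro ⟨e, v⟩ h
    obtain ⟨w, rfl⟩ : v ∈ e := h.2.1
    have h' : IsRootedSubtree T s(w, v) v (Rtwo 3) 0 := Sym2.eq_swap (a := v) ▸ h
    exact ⟨(v, w), (isRootedSubtree_Rtwo_three_iff hT).1 h', by simp [Sym2.eq_swap]⟩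

end Cherry

section Leg

variable {V : Type} {T : SimpleGraph V} {t u w : V}

theorem IsOneLegAt.ncard_leaves_branch (hT : T.IsAcyclic) (h : IsOneLegAt T t u) :
    {v | IsLeaf T v ∧ v ∈ branch T t u}.ncard = 1 := by
  obtain ⟨n, hn, h⟩ := h
  rw [h.ncard_leaves_branch hT, Set.ncard_eq_one]
  refine ⟨⟨n - 1, by omega⟩, ?_⟩
  ext i
  grind [plantedDegree_pathGraph]

theorem IsTwoLegAt.ncard_leaves_branch (hT : T.IsAcyclic) (h : IsTwoLegAt T t u) :
    {v | IsLeaf T v ∧ v ∈ branch T t u}.ncard = 2 := by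
  obtain ⟨n, hn, h⟩ := h
  rw [h.ncard_leaves_branch hT, Set.ncard_eq_two]
  refine ⟨⟨n - 2, by omega⟩, ⟨n - 1, by omega⟩, by grind, ?_⟩
  ext i
  grind [plantedDegree_Rtwo hn]

theorem IsTwoLegAt.not_isLeaf (hT : T.IsAcyclic) (h : IsTwoLegAt T t u) : ¬ IsLeaf T u := by
  obtain ⟨n, hn, h⟩ := h
  obtain ⟨g, rfl, hg⟩ := (isRootedSubtree_iff_exists_embedding hT h.1).1 h
  rw [IsLeaf, ncard_neighborSet_embedding hT h.1 rfl hg, plantedDegree_Rtwo hn]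
  grind

theorem IsOneLegAt.ncard_cherries_branch (hT : T.IsAcyclic) (h : IsOneLegAt T t u) :
    {p : V × V | IsCherry T p.1 p.2 ∧ p.1 ∈ branch T t u}.ncard = 0 := by
  obtain ⟨n, hn, h⟩ := h
  obtain ⟨g, hr, hg⟩ := (isRootedSubtree_iff_exists_embedding hT h.1).1 h
  suffices hempty : {p : V × V | IsCherry T p.1 p.2 ∧ p.1 ∈ branch T t u} = ∅ by
    rw [hempty, Set.ncard_empty]
  rw [← hg, Set.eq_empty_iff_forall_notMem]
  rintro ⟨-, w⟩ ⟨hcherry, i, rfl⟩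
  have hdeg := hcherry.2.1
  rw [ncard_neighborSet_embedding hT h.1 hr hg, plantedDegree_pathGraph] at hdeg
  grind

theorem IsTwoLegAt.exists_isCherry_iff (hT : T.IsAcyclic) (ht : ¬ IsLeaf T t)
    (h : IsTwoLegAt T t u) :
    ∃ f x, f ∈ branch T t u ∧ ∀ v ∈ branch T t u, ∀ w, IsCherry T v w ↔ v = f ∧ w = x := by
  obtain ⟨n, hn, h⟩ := h
  obtain ⟨g, hr, hg⟩ := (isRootedSubtree_iff_exists_embedding hT h.1).1 h
  have hdeg (i : Fin n) := (ncard_neighborSet_embedding hT h.1 hr hg i).trans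
    (plantedDegree_Rtwo hn i)
  have hadj (i j : Fin n) := (g.map_adj_iff (v := i) (w := j)).trans (Rtwo_adj hn i j)
  let fork : Fin n := ⟨n - 3, by omega⟩
  let tip₁ : Fin n := ⟨n - 2, by omega⟩
  let tip₂ : Fin n := ⟨n - 1, by omega⟩
  obtain ⟨x, hfx, hx⟩ : ∃ x, T.Adj (g fork) x ∧ ¬ IsLeaf T x := by
    rcases hn.eq_or_lt with rfl | hn
    · exact ⟨t, hr ▸ h.1.symm, ht⟩
    · exact ⟨g ⟨n - 4, by omega⟩, (hadj _ _).2 (by grind), by grind [IsLeaf]⟩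
  have hfork (w : V) : IsCherry T (g fork) w ↔ w = x :=
    isCherry_iff_eq (a := g tip₁) (b := g tip₂) (by grind) ((hadj _ _).2 (by grind))
      ((hadj _ _).2 (by grind)) (g.injective.ne (by grind)) (by grind [IsLeaf])
      (by grind [IsLeaf]) hfx hx
  refine ⟨g fork, x, hg ▸ Set.mem_range_self fork, ?_⟩
  rw [← hg]
  rintro _ ⟨i, rfl⟩ w
  constructor
  · intro hcherry
    have hi := (hdeg i).symm.trans hcherry.2.1
    obtain rfl : i = fork := by grind
    exact ⟨rfl, (hfork w).1 hcherry⟩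
  · rintro ⟨hi, hw⟩
    exact hi ▸ (hfork w).2 hw

theorem IsTwoLegAt.ncard_cherries_branch (hT : T.IsAcyclic) (ht : ¬ IsLeaf T t)
    (h : IsTwoLegAt T t u) :
    {p : V × V | IsCherry T p.1 p.2 ∧ p.1 ∈ branch T t u}.ncard = 1 := by
  obtain ⟨f, x, hf, hcherry⟩ := h.exists_isCherry_iff hT ht
  refine Set.ncard_eq_one.2 ⟨(f, x), Set.eq_singleton_iff_unique_mem.2 ⟨?_, ?_⟩⟩
  · exact ⟨(hcherry f hf x).2 ⟨rfl, rfl⟩, hf⟩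
  · rintro ⟨v, w⟩ ⟨hvw, hv⟩
    exact Prod.ext_iff.2 ((hcherry v hv w).1 hvw)

theorem IsCherry.ncard_twoLegs_le_one (hT : T.IsAcyclic) (h : IsCherry T t w) :
    {u | T.Adj t u ∧ IsTwoLegAt T t u}.ncard ≤ 1 := by
  have hsub : {u | T.Adj t u ∧ IsTwoLegAt T t u} ⊆ {w} := by
    rintro u ⟨htu, htwo⟩
    by_contra huw
    exact htwo.not_isLeaf hT (h.2.2 u htu huw)
  exact (Set.ncard_le_ncard hsub (Set.finite_singleton w)).trans_eq (Set.ncard_singleton w)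

end Leg

section Neighbors

variable {V : Type*} {T : SimpleGraph V} {t : V} [Fintype (T.neighborSet t)]

theorem card_neighborFinset_eq_ncard : (T.neighborFinset t).card = (T.neighborSet t).ncard := by
  rw [← Set.ncard_coe_finset, coe_neighborFinset]

theorem sum_neighborFinset_boole (p : V → Prop) [DecidablePred p] :
    ∑ u ∈ T.neighborFinset t, (if p u then 1 else 0) = {u | T.Adj t u ∧ p u}.ncard := by
  rw [← Finset.card_filter, ← Set.ncard_coe_finset]
  simp

end Neighbors

section Spider

variable {V : Type} {T : SimpleGraph V} {t : V}

theorem IsTwoSpiderWithTorso.not_isLeaf_torso (h : IsTwoSpiderWithTorso T t) : ¬ IsLeaf T t :=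
  fun ht => absurd (ht ▸ h.2.1) (by decide)

variable [Fintype V]

theorem IsTwoSpiderWithTorso.leafCount_eq (h : IsTwoSpiderWithTorso T t) :
    leafCount T = (T.neighborSet t).ncard + {u | T.Adj t u ∧ IsTwoLegAt T t u}.ncard := by
  classical
  have ⟨hT, _, hlegs⟩ := h
  have htorso : {v | IsLeaf T v ∧ id v = t} = ∅ :=
    Set.eq_empty_iff_forall_notMem.2 fun v hv => h.not_isLeaf_torso (hv.2 ▸ hv.1)
  have hleg : ∀ u ∈ T.neighborFinset t, {v | IsLeaf T v ∧ id v ∈ branch T t u}.ncard =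
      1 + if IsTwoLegAt T t u then 1 else 0 := by
    intro u hu
    split_ifs with htwo
    · exact htwo.ncard_leaves_branch hT.isAcyclic
    · exact ((hlegs u (by simpa using hu)).resolve_right htwo).ncard_leaves_branch hT.isAcyclic
  calc leafCount T
      = {v | IsLeaf T v ∧ id v = t}.ncard +
          ∑ u ∈ T.neighborFinset t, {v | IsLeaf T v ∧ id v ∈ branch T t u}.ncard :=
        ncard_eq_add_sum_branch hT t id (IsLeaf T)
    _ = ∑ u ∈ T.neighborFinset t, (1 + if IsTwoLegAt T t u then 1 else 0) := by
        rw [htorso, Set.ncard_empty, zero_add, Finset.sum_congr rfl hleg]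
    _ = (T.neighborSet t).ncard + {u | T.Adj t u ∧ IsTwoLegAt T t u}.ncard := by
        rw [Finset.sum_add_distrib, sum_neighborFinset_boole, ← Finset.card_eq_sum_ones,
          card_neighborFinset_eq_ncard]

theorem IsTwoSpiderWithTorso.rho_Rtwo_three_eq (h : IsTwoSpiderWithTorso T t) :
    rho T (Rtwo 3) 0 =
      {w | IsCherry T t w}.ncard + {u | T.Adj t u ∧ IsTwoLegAt T t u}.ncard := by
  classical
  have ⟨hT, _, hlegs⟩ := h
  have htorso : {p : V × V | IsCherry T p.1 p.2 ∧ p.1 = t} = Prod.mk t '' {w | IsCherry T t w} := by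
    ext ⟨v, w⟩
    constructor
    · rintro ⟨hcherry, rfl⟩
      exact ⟨w, hcherry, rfl⟩
    · rintro ⟨_, hcherry, ⟨⟩⟩
      exact ⟨hcherry, rfl⟩
  have hleg : ∀ u ∈ T.neighborFinset t,
      {p : V × V | IsCherry T p.1 p.2 ∧ p.1 ∈ branch T t u}.ncard =
        if IsTwoLegAt T t u then 1 else 0 := by
    intro u hu
    split_ifs with htwo
    · exact htwo.ncard_cherries_branch hT.isAcyclic h.not_isLeaf_torso
    · exact ((hlegs u (by simpa using hu)).resolve_right htwo).ncard_cherries_branch hT.isAcyclic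
  rw [rho_Rtwo_three hT.isAcyclic, ncard_eq_add_sum_branch hT t Prod.fst, htorso,
    Set.ncard_image_of_injective _ (Prod.mk_right_injective t), Finset.sum_congr rfl hleg,
    sum_neighborFinset_boole]

theorem card_eq_one_add_sum_legOrder [Fintype (T.neighborSet t)] (hT : T.IsTree) :
    Fintype.card V = 1 + ∑ u ∈ T.neighborFinset t, legOrder T t u := by
  have hsum := ncard_eq_add_sum_branch hT t id fun _ => True
  change Fintype.card V = 1 + ∑ u ∈ T.neighborFinset t, (branch T t u).ncard
  simpa [Set.ncard_univ] using hsum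

theorem exists_adj_not_isLeaf (hT : T.IsTree) (h : (T.neighborSet t).ncard + 1 < Fintype.card V) :
    ∃ u, T.Adj t u ∧ ¬ IsLeaf T u := by
  classical
  by_contra! hleaf
  have hsum : ∑ u ∈ T.neighborFinset t, legOrder T t u = (T.neighborSet t).ncard := by
    rw [← card_neighborFinset_eq_ncard, Finset.card_eq_sum_ones]
    refine Finset.sum_congr rfl fun u hu => ?_
    have htu : T.Adj t u := by simpa using hu
    exact (ncard_branch_eq_one_iff hT.isAcyclic htu).2 (hleaf u htu)
  have := card_eq_one_add_sum_legOrder (t := t) hT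
  omega

theorem ThreeLegsTwoSingletons.exists_isCherry_iff_eq (hT : T.IsTree)
    (h : ThreeLegsTwoSingletons T t) (hV : 4 < Fintype.card V) :
    ∃ x, ∀ w, IsCherry T t w ↔ w = x := by
  obtain ⟨hdeg, a, b, hab, hta, htb, ha, hb⟩ := h
  obtain ⟨x, htx, hx⟩ := exists_adj_not_isLeaf (t := t) hT (by omega)
  have hleaf {u : V} (htu : T.Adj t u) (hu : legOrder T t u = 1) : IsLeaf T u :=
    (ncard_branch_eq_one_iff hT.isAcyclic htu).1 hu
  exact ⟨x, fun w => isCherry_iff_eq hdeg hta htb hab (hleaf hta ha) (hleaf htb hb) htx hx⟩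

end Spider

/-- If `T` is a 2-spider of order `d ≥ 6` with exactly three legs, two of them of order one,
then either `ρ_{3,2}(T) = 1` and `T` has 3 leaves, or `ρ_{3,2}(T) = 2` and `T` has 4 leaves;
moreover the number of 2-legs of `T` equals `ρ_{3,2}(T) - 1`. -/
theorem twoSpider_caseI {V : Type} [Fintype V] (T : SimpleGraph V) (t : V)
    (d : ℕ) (hd : Fintype.card V = d) (hd6 : 6 ≤ d)
    (hsp : IsTwoSpiderWithTorso T t) (hcase : ThreeLegsTwoSingletons T t) :
    ((rho T (Rtwo 3) 0 = 1 ∧ leafCount T = 3) ∨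
     (rho T (Rtwo 3) 0 = 2 ∧ leafCount T = 4)) ∧
    Set.ncard {u : V | T.Adj t u ∧ IsTwoLegAt T t u} = rho T (Rtwo 3) 0 - 1 := by
  obtain ⟨x, hx⟩ := hcase.exists_isCherry_iff_eq hsp.1 (by omega)
  have hcherry : {w | IsCherry T t w}.ncard = 1 := Set.ncard_eq_one.2 ⟨x, Set.ext hx⟩
  have hdeg : (T.neighborSet t).ncard = 3 := hcase.1
  have hle := ((hx x).2 rfl).ncard_twoLegs_le_one hsp.1.isAcyclic
  have hrho := hsp.rho_Rtwo_three_eq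
  have hleaves := hsp.leafCount_eq
  omega
end
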